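/- arXiv:1004.0731 — 2 statements merged into one kernel-verified Lean document; each statement's English description precedes it below -/
import Mathlib

section
/- Let $K$ be a field of characteristic $p > 2$, $f \in K$, and $s \ge 0$. Then the sequence $x_n = (f+n)^{(p^s+1)/2}$ satisfies the Büchi equations $x_n^2 - 2x_{n-1}^2 + x_{n-2}^2 = 2$ for all integers $n$. -/
theorem add_intCast_pow_char_pow {R : Type*} [CommRing R] (p : ℕ) [Fact p.Prime] [CharP R p]
    (f : R) (s : ℕ) (n : ℤ) : (f + (n : R)) ^ p ^ s = f ^ p ^ s + (n : R) := by
  simpa only [iterateFrobenius_def, map_intCast] using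
    map_add (iterateFrobenius R p s) f (n : R)

/-- Pasten's nontrivial solutions: in characteristic `p > 2` the
sequence `x_n = (f+n)^{(p^s+1)/2}` satisfies the Büchi equations
`x_n^2 - 2 x_{n-1}^2 + x_{n-2}^2 = 2`. -/
theorem pasten_sequence_buchi (K : Type) [Field K]
    (p : ℕ) (hp : p.Prime) [CharP K p] (hodd : 2 < p)
    (f : K) (s : ℕ) (x : ℤ → K)
    (hx : ∀ n : ℤ, x n = (f + (n : K)) ^ ((p ^ s + 1) / 2)) :
    ∀ n : ℤ, x n ^ 2 - 2 * x (n - 1) ^ 2 + x (n - 2) ^ 2 = 2 := by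
  have : Fact p.Prime := ⟨hp⟩
  have h_even : Even (p ^ s + 1) := ((hp.odd_of_ne_two hodd.ne').pow).add_one
  have hx_sq (n : ℤ) : x n ^ 2 = (f ^ p ^ s + (n : K)) * (f + (n : K)) := by
    rw [hx, ← pow_mul, Nat.div_mul_cancel h_even.two_dvd, pow_succ, add_intCast_pow_char_pow]
  intro n
  rw [hx_sq, hx_sq, hx_sq]
  push_cast
  ring
end

section
/- Let $K$ be a function field of genus $g$ over a field of constants $F$ of characteristic $0$, let $r \ge 2$, and let $c_0, \dots, c_{M-1}$ be distinct rational numbers. Suppose $a, \nu \in K$ and $x_0, \dots, x_{M-1} \in K$ with at least one $x_i \notin F$ satisfy $x_n^r = (\nu + c_n)^r - a$ for all $0 \le n \le M-1$. If $M \ge \left(8r + 4 + \frac{3r}{r-1}\right) 3r^2 g + \left(4r + 2 + \frac{2r}{r-1}\right) 3r^2 + 1$, then $a = 0$. -/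
set_option linter.unnecessarySimpa false

/-- A place of a one-variable function field `K` over its field of constants `F`:
a normalized (`ℤ`-valued, surjective) discrete valuation on `K`, trivial on `F`. -/
structure FFPlace (F K : Type) [Field F] [Field K] [Algebra F K] where
  ord : K → ℤ
  ord_zero : ord 0 = 0
  ord_mul : ∀ x y : K, x ≠ 0 → y ≠ 0 → ord (x * y) = ord x + ord y
  ord_add : ∀ x y : K, x ≠ 0 → y ≠ 0 → x + y ≠ 0 → min (ord x) (ord y) ≤ ord (x + y)
  ord_surj : ∀ n : ℤ, ∃ x : K, x ≠ 0 ∧ ord x = n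
  ord_algebraMap : ∀ c : F, c ≠ 0 → ord (algebraMap F K c) = 0

variable {F K : Type} [Field F] [Field K] [Algebra F K]

theorem FFPlace.ord_one (p : FFPlace F K) : p.ord 1 = 0 := by
  have h := p.ord_mul 1 1 one_ne_zero one_ne_zero
  rw [mul_one] at h; omega

theorem FFPlace.ord_neg (p : FFPlace F K) (x : K) (hx : x ≠ 0) :
    p.ord (-x) = p.ord x := by
  have hm1 : p.ord (-1 : K) = 0 := by
    have h := p.ord_mul (-1) (-1) (by norm_num) (by norm_num)
    rw [neg_mul_neg, one_mul] at h
    rw [p.ord_one] at h; omega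
  have h := p.ord_mul (-1) x (by norm_num) hx
  rw [neg_one_mul, hm1, zero_add] at h
  exact h

/-- The valuation ring of a place. -/
def FFPlace.valRing (p : FFPlace F K) : Subring K where
  carrier := {x : K | x = 0 ∨ 0 ≤ p.ord x}
  zero_mem' := Or.inl rfl
  one_mem' := Or.inr (le_of_eq p.ord_one.symm)
  add_mem' := by
    rintro a b (rfl | ha) (rfl | hb)
    · simpa using Or.inl rfl
    · simpa using Or.inr hb
    · simpa using Or.inr ha
    · by_cases h0 : a = 0
      · subst h0; simpa using Or.inr hb
      by_cases h0' : b = 0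
      · subst h0'; simpa using Or.inr ha
      by_cases hab : a + b = 0
      · exact Or.inl hab
      · exact Or.inr (le_trans (le_min ha hb) (p.ord_add a b h0 h0' hab))
  mul_mem' := by
    rintro a b (rfl | ha) (rfl | hb)
    · simpa using Or.inl rfl
    · simpa using Or.inl rfl
    · simpa using Or.inl rfl
    · by_cases h0 : a = 0
      · subst h0; simpa using Or.inl rfl
      by_cases h0' : b = 0
      · subst h0'; simpa using Or.inl rfl
      · exact Or.inr (by rw [p.ord_mul a b h0 h0']; exact add_nonneg ha hb)
  neg_mem' := by
    rintro a (rfl | ha)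
    · simpa using Or.inl rfl
    · by_cases h0 : a = 0
      · subst h0; simpa using Or.inl rfl
      · exact Or.inr (by rw [p.ord_neg a h0]; exact ha)

/-- The maximal ideal of the valuation ring of a place. -/
def FFPlace.maxIdeal (p : FFPlace F K) : Ideal p.valRing where
  carrier := {x : p.valRing | (x : K) = 0 ∨ 1 ≤ p.ord x}
  zero_mem' := Or.inl rfl
  add_mem' := by
    rintro ⟨a, hamem⟩ ⟨b, hbmem⟩ (ha | ha) (hb | hb) <;>
      simp only [Set.mem_setOf_eq, Subring.coe_add] at *
    · subst ha; subst hb; simp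
    · subst ha; simpa using Or.inr hb
    · subst hb; simpa using Or.inr ha
    · by_cases h0 : a = 0
      · subst h0; simpa using Or.inr hb
      by_cases h0' : b = 0
      · subst h0'; simpa using Or.inr ha
      by_cases hab : a + b = 0
      · exact Or.inl hab
      · exact Or.inr (le_trans (le_min ha hb) (p.ord_add a b h0 h0' hab))
  smul_mem' := by
    rintro ⟨c, hcmem⟩ ⟨a, hamem⟩ (ha | ha) <;>
      simp only [Set.mem_setOf_eq, smul_eq_mul, Subring.coe_mul] at *
    · subst ha; simp
    · by_cases h0 : c = 0
      · subst h0; simp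
      by_cases h0' : a = 0
      · subst h0'; simp
      · refine Or.inr ?_
        rw [p.ord_mul c a h0 h0']
        rcases hcmem with rfl | hc
        · exact absurd rfl h0
        · omega

noncomputable instance (p : FFPlace F K) : Algebra F p.valRing :=
  RingHom.toAlgebra (RingHom.codRestrict (algebraMap F K) p.valRing (by
    intro c
    by_cases hc : c = 0
    · exact Or.inl (by simp [hc])
    · exact Or.inr (le_of_eq (p.ord_algebraMap c hc).symm)))

/-- The degree of a place: the dimension over `F` of its residue field. -/
noncomputable def FFPlace.deg (p : FFPlace F K) : ℕ :=
  Module.finrank F (p.valRing ⧸ p.maxIdeal)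

/-- The degree of a divisor (a finitely supported `ℤ`-valued function on places). -/
noncomputable def divDeg (A : FFPlace F K →₀ ℤ) : ℤ :=
  A.sum fun p n => n * p.deg

/-- The Riemann–Roch space `L(A)` of a divisor `A`. -/
def RRspace (A : FFPlace F K →₀ ℤ) : Submodule F K where
  carrier := {f : K | f = 0 ∨ ∀ p : FFPlace F K, -(A p) ≤ p.ord f}
  zero_mem' := Or.inl rfl
  add_mem' := by
    rintro a b (rfl | ha) (rfl | hb)
    · simpa using Or.inl rfl
    · simpa using Or.inr hb
    · simpa using Or.inr ha
    · by_cases h0 : a = 0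
      · subst h0; simpa using Or.inr hb
      by_cases h0' : b = 0
      · subst h0'; simpa using Or.inr ha
      by_cases hab : a + b = 0
      · exact Or.inl hab
      · refine Or.inr fun p => le_trans (le_min (ha p) (hb p))
          (p.ord_add a b h0 h0' hab)
  smul_mem' := by
    rintro c a (rfl | ha)
    · simpa using Or.inl rfl
    · by_cases hc : c = 0
      · subst hc; simpa using Or.inl rfl
      by_cases h0 : a = 0
      · subst h0; simpa using Or.inl rfl
      · refine Or.inr fun p => ?_
        have hca : (algebraMap F K c) ≠ 0 :=
          fun h => hc ((algebraMap F K).injective (by simpa using h))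
        show -(A p) ≤ p.ord (c • a)
        rw [Algebra.smul_def, p.ord_mul _ a hca h0, p.ord_algebraMap c hc, zero_add]
        exact ha p

/-- `ℓ(A)`, the dimension over `F` of the Riemann–Roch space of `A`. -/
noncomputable def ellDim (A : FFPlace F K →₀ ℤ) : ℕ :=
  Module.finrank F (RRspace A)

/-- `K` is a function field (of one variable) over `F`. -/
def IsFunctionField (F K : Type) [Field F] [Field K] [Algebra F K] : Prop :=
  ∃ t : K, Transcendental F t ∧
    FiniteDimensional (IntermediateField.adjoin F {t}) K

/-- `F` is the exact field of constants of `K`. -/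
def IsConstantField (F K : Type) [Field F] [Field K] [Algebra F K] : Prop :=
  ∀ z : K, IsAlgebraic F z → z ∈ (algebraMap F K).range

/-- `K/F` has genus `g`: `g` is the largest value of `deg A - ℓ(A) + 1`
over all divisors `A` of `K`. -/
def IsGenus (F K : Type) [Field F] [Field K] [Algebra F K] (g : ℕ) : Prop :=
  IsGreatest {n : ℤ | ∃ A : FFPlace F K →₀ ℤ, n = divDeg A - ellDim A + 1} g

namespace FFPlace

/-- `x` vanishes to order at least `i` at `p` (with the convention that `0` vanishes to
infinite order). -/
def Ge (p : FFPlace F K) (x : K) (i : ℤ) : Prop := x = 0 ∨ i ≤ p.ord x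

variable {p : FFPlace F K} {x y : K} {i j : ℤ}

theorem Ge.zero (p : FFPlace F K) (i : ℤ) : p.Ge 0 i := Or.inl rfl

theorem Ge.of_le (h : i ≤ p.ord x) : p.Ge x i := Or.inr h

theorem Ge.le_ord (h : p.Ge x i) (hx : x ≠ 0) : i ≤ p.ord x := h.resolve_left hx

theorem Ge.mono (h : p.Ge x i) (hij : j ≤ i) : p.Ge x j := h.imp_right hij.trans

theorem Ge.add (hx : p.Ge x i) (hy : p.Ge y i) : p.Ge (x + y) i := by
  by_cases h0 : x = 0
  · simpa [h0] using hy
  by_cases h1 : y = 0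
  · simpa [h1] using hx
  by_cases h2 : x + y = 0
  · exact Or.inl h2
  · exact Or.inr ((le_min (hx.le_ord h0) (hy.le_ord h1)).trans (p.ord_add x y h0 h1 h2))

theorem Ge.neg (hx : p.Ge x i) : p.Ge (-x) i := by
  by_cases h0 : x = 0
  · simpa [h0] using hx
  · exact Or.inr (by rw [p.ord_neg x h0]; exact hx.le_ord h0)

theorem Ge.sub (hx : p.Ge x i) (hy : p.Ge y i) : p.Ge (x - y) i := by
  rw [sub_eq_add_neg]; exact hx.add hy.neg

theorem Ge.mul (hx : p.Ge x i) (hy : p.Ge y j) : p.Ge (x * y) (i + j) := by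
  by_cases h0 : x = 0
  · exact Or.inl (by simp [h0])
  by_cases h1 : y = 0
  · exact Or.inl (by simp [h1])
  · exact Or.inr (by rw [p.ord_mul x y h0 h1]; exact add_le_add (hx.le_ord h0) (hy.le_ord h1))

theorem Ge.one (p : FFPlace F K) : p.Ge 1 0 := Or.inr p.ord_one.ge

theorem Ge.algebraMap (p : FFPlace F K) (c : F) : p.Ge (algebraMap F K c) 0 := by
  by_cases hc : c = 0
  · exact Or.inl (by simp [hc])
  · exact Or.inr (p.ord_algebraMap c hc).ge

theorem Ge.natCast (p : FFPlace F K) (n : ℕ) : p.Ge (n : K) 0 := by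
  simpa using Ge.algebraMap p (n : F)

theorem Ge.pow (hx : p.Ge x i) (n : ℕ) : p.Ge (x ^ n) (n * i) := by
  induction n with
  | zero => simpa using Ge.one p
  | succ n ih =>
    rw [pow_succ]
    exact (ih.mul hx).mono (by push_cast; linarith)

theorem Ge.sum {ι : Type*} {s : Finset ι} {f : ι → K} (h : ∀ k ∈ s, p.Ge (f k) i) :
    p.Ge (∑ k ∈ s, f k) i := by
  classical
  induction s using Finset.induction_on with
  | empty => simpa using Ge.zero p i
  | insert a s ha ih =>
    rw [Finset.sum_insert ha]
    exact (h a (by simp)).add (ih fun k hk => h k (by simp [hk]))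

theorem Ge.aeval (hx : p.Ge x 0) (q : Polynomial F) : p.Ge (Polynomial.aeval x q) 0 := by
  rw [Polynomial.aeval_eq_sum_range]
  refine Ge.sum fun k _ => ?_
  rw [Algebra.smul_def]
  simpa using (Ge.algebraMap p _).mul (hx.pow k)

theorem ord_inv (p : FFPlace F K) (x : K) : p.ord x⁻¹ = -p.ord x := by
  by_cases h0 : x = 0
  · simp [h0, p.ord_zero]
  · have h := p.ord_mul x x⁻¹ h0 (inv_ne_zero h0)
    rw [mul_inv_cancel₀ h0, p.ord_one] at h
    omega

theorem ord_pow (p : FFPlace F K) (x : K) (n : ℕ) : p.ord (x ^ n) = n * p.ord x := by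
  by_cases h0 : x = 0
  · rcases n with _ | n
    · simp [p.ord_one]
    · simp [h0, p.ord_zero]
  · induction n with
    | zero => simp [p.ord_one]
    | succ n ih => rw [pow_succ, p.ord_mul _ _ (pow_ne_zero _ h0) h0, ih]; push_cast; ring

theorem Ge.inv_iff (h0 : x ≠ 0) : p.Ge x⁻¹ i ↔ p.ord x ≤ -i := by
  constructor
  · intro h
    have := h.le_ord (inv_ne_zero h0)
    rw [p.ord_inv] at this
    omega
  · intro h
    exact Or.inr (by rw [p.ord_inv]; omega)

theorem ord_add_eq_of_lt (hx : x ≠ 0) (hy : p.Ge y (p.ord x + 1)) :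
    x + y ≠ 0 ∧ p.ord (x + y) = p.ord x := by
  have hne : x + y ≠ 0 := by
    intro h
    have hyx : x = -y := eq_neg_of_add_eq_zero_left h
    have := (hyx ▸ hy.neg : p.Ge x (p.ord x + 1)).le_ord hx
    omega
  refine ⟨hne, le_antisymm ?_ ?_⟩
  · by_contra! hlt
    have h1 : p.Ge (x + y) (p.ord x + 1) := Or.inr hlt
    have h2 := h1.sub hy
    rw [add_sub_cancel_right] at h2
    have := h2.le_ord hx
    omega
  · exact ((Ge.of_le le_rfl : p.Ge x (p.ord x)).add (hy.mono (by omega))).le_ord hne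

/-- Polynomials in an element with a pole. -/
theorem ord_aeval_of_neg (hx : p.ord x < 0) {q : Polynomial F} (hq : q ≠ 0) :
    Polynomial.aeval x q ≠ 0 ∧ p.ord (Polynomial.aeval x q) = q.natDegree * p.ord x := by
  have hx0 : x ≠ 0 := by
    rintro rfl
    simp [p.ord_zero] at hx
  have hlc : algebraMap F K q.leadingCoeff ≠ 0 := by simpa using hq
  have key : p.ord (algebraMap F K q.leadingCoeff * x ^ q.natDegree) = q.natDegree * p.ord x := by
    rw [p.ord_mul _ _ hlc (pow_ne_zero _ hx0), p.ord_algebraMap _ (by simpa using hq), p.ord_pow,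
      zero_add]
  have hsplit : Polynomial.aeval x q = algebraMap F K q.leadingCoeff * x ^ q.natDegree
      + ∑ k ∈ Finset.range q.natDegree, q.coeff k • x ^ k := by
    rw [Polynomial.aeval_eq_sum_range, Finset.sum_range_succ, add_comm, Algebra.smul_def]
    rfl
  rw [hsplit, ← key]
  refine ord_add_eq_of_lt (mul_ne_zero hlc (pow_ne_zero _ hx0)) ?_
  rw [key]
  refine Ge.sum fun k hk => ?_
  rw [Finset.mem_range] at hk
  rw [Algebra.smul_def]
  refine ((Ge.algebraMap p _).mul ((Ge.of_le le_rfl : p.Ge x (p.ord x)).pow k)).mono ?_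
  have : (k : ℤ) + 1 ≤ q.natDegree := by exact_mod_cast hk
  nlinarith

end FFPlace

theorem IsFunctionField.finiteDimensional_adjoin (hff : IsFunctionField F K) {z : K}
    (hz : Transcendental F z) :
    FiniteDimensional (IntermediateField.adjoin F {z}) K := by
  obtain ⟨t, ht, hfin⟩ := hff
  have hess : Algebra.EssFiniteType F K := by
    have h1 : Algebra.EssFiniteType F (IntermediateField.adjoin F {t}) :=
      IntermediateField.essFiniteType_iff.2 ⟨{t}, by simp⟩
    exact Algebra.EssFiniteType.comp F (IntermediateField.adjoin F {t}) K
  have hbt : IsTranscendenceBasis F (fun _ : Unit => t) := by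
    rw [isTranscendenceBasis_iff_algebraicIndependent_isAlgebraic]
    refine ⟨algebraicIndependent_unique_type_iff.2 ht, ?_⟩
    have halgt : Algebra.IsAlgebraic (IntermediateField.adjoin F {t}) K := inferInstance
    rw [Set.range_const]
    let : Algebra (Algebra.adjoin F {t}) (IntermediateField.adjoin F {t}) :=
      (Subalgebra.inclusion (IntermediateField.algebra_adjoin_le_adjoin F {t})).toRingHom.toAlgebra
    have : IsScalarTower (Algebra.adjoin F {t}) (IntermediateField.adjoin F {t}) K :=
      IsScalarTower.of_algebraMap_eq' rfl
    open scoped IntermediateField.algebraAdjoinAdjoin in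
    have : IsFractionRing (Algebra.adjoin F {t}) (IntermediateField.adjoin F {t}) :=
      inferInstance
    exact (IsFractionRing.comap_isAlgebraic_iff (A := Algebra.adjoin F {t})
      (K := IntermediateField.adjoin F {t}) (C := K)).2 halgt
  have hbz : IsTranscendenceBasis F (fun _ : Unit => z) := by
    have h1 : AlgebraicIndependent F (fun _ : Unit => z) :=
      algebraicIndependent_unique_type_iff.2 hz
    refine h1.isTranscendenceBasis_of_trdeg_le_of_finite ?_
    rw [← hbt.cardinalMk_eq_trdeg]
  have halg := hbz.isAlgebraic_field
  rw [Set.range_const] at halg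
  have : Algebra.EssFiniteType (IntermediateField.adjoin F {z}) K := .of_comp F _ _
  exact Algebra.finite_of_essFiniteType_of_isAlgebraic

open Polynomial in
/-- A family is linearly independent over `F(z)` as soon as the constant coefficients of every
polynomial relation in `z` vanish. -/
theorem linearIndependent_adjoin_of_coeff_zero {z : K} (hz : Transcendental F z)
    {ι : Type} [Fintype ι] (w : ι → K)
    (h : ∀ q : ι → F[X], ∑ i, aeval z (q i) * w i = 0 → ∀ i, (q i).coeff 0 = 0) :
    LinearIndependent (IntermediateField.adjoin F {z}) w := by
  have hz0 : z ≠ 0 := fun h0 => hz (h0 ▸ isAlgebraic_zero)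
  have hdiv : ∀ n : ℕ, ∀ q : ι → F[X], ∑ i, aeval z (q i) * w i = 0 → ∀ i, X ^ n ∣ q i := by
    intro n
    induction n with
    | zero => intro q _ i; simp
    | succ n ih =>
      intro q hq
      choose q' hq' using fun i => X_dvd_iff.2 (h q hq i)
      have hrel : ∑ i, aeval z (q' i) * w i = 0 := by
        have : z * ∑ i, aeval z (q' i) * w i = 0 := by
          rw [← hq, Finset.mul_sum]
          refine Finset.sum_congr rfl fun i _ => ?_
          rw [hq' i, map_mul, aeval_X, mul_assoc]
        exact (mul_eq_zero.1 this).resolve_left hz0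
      intro i
      rw [hq' i, pow_succ']
      exact mul_dvd_mul_left _ (ih q' hrel i)
  have hzero : ∀ q : ι → F[X], ∑ i, aeval z (q i) * w i = 0 → ∀ i, q i = 0 := by
    intro q hq i
    by_contra h0
    have h1 := natDegree_le_of_dvd (hdiv ((q i).natDegree + 1) q hq i) h0
    rw [natDegree_X_pow] at h1
    omega
  open scoped IntermediateField.algebraAdjoinAdjoin in
  rw [← LinearIndependent.iff_fractionRing (R := Algebra.adjoin F {z})
    (K := IntermediateField.adjoin F {z}), Fintype.linearIndependent_iff]
  intro c hc i
  have hex : ∀ i, ∃ q : F[X], aeval z q = (c i : K) := by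
    intro i
    have hmem : ∀ u ∈ Algebra.adjoin F {z}, ∃ q : F[X], aeval z q = u := by
      intro u hu
      rwa [Algebra.adjoin_singleton_eq_range_aeval] at hu
    exact hmem _ (c i).2
  choose q hq using hex
  have := hzero q (by
    rw [← hc]
    refine Finset.sum_congr rfl fun i _ => ?_
    rw [hq, Algebra.smul_def]
    rfl) i
  apply Subtype.ext
  rw [← hq, this]
  simp

namespace FFPlace

variable {p : FFPlace F K} {x y z : K} {i j : ℤ}

theorem mem_maxIdeal {x : p.valRing} : x ∈ p.maxIdeal ↔ p.Ge (x : K) 1 := Iff.rfl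

theorem transcendental_of_ord_ne_zero (hp : p.ord x ≠ 0) : Transcendental F x := by
  intro halg
  have key : ∀ y : K, IsAlgebraic F y → ¬ p.ord y < 0 := by
    rintro y ⟨q, hq0, hq⟩ hneg
    exact (ord_aeval_of_neg hneg hq0).1 hq
  rcases lt_or_gt_of_ne hp with h | h
  · exact key x halg h
  · exact key x⁻¹ halg.inv (by rw [ord_inv]; omega)

theorem exists_uniformizer (p : FFPlace F K) : ∃ x : K, x ≠ 0 ∧ p.ord x = 1 := p.ord_surj 1

/-- The constants of a polynomial expression in an element vanishing at `p`. -/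
theorem Ge.aeval_sub_coeff_zero (hz : p.Ge z 1) (q : Polynomial F) :
    p.Ge (Polynomial.aeval z q - Algebra.algebraMap F K (q.coeff 0)) 1 := by
  have h : Polynomial.aeval z q - Algebra.algebraMap F K (q.coeff 0)
      = z * Polynomial.aeval z q.divX := by
    have h1 := congrArg (Polynomial.aeval z) (Polynomial.divX_mul_X_add q)
    rw [map_add, map_mul, Polynomial.aeval_X, Polynomial.aeval_C] at h1
    rw [← h1]
    ring
  rw [h]
  simpa using hz.mul (Ge.aeval (hz.mono zero_le_one) q.divX)

theorem finite_residue (hff : IsFunctionField F K) (p : FFPlace F K) :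
    Module.Finite F (p.valRing ⧸ p.maxIdeal) := by
  obtain ⟨z, hz0, hz1⟩ := p.exists_uniformizer
  have hz : Transcendental F z := transcendental_of_ord_ne_zero (p := p) (by omega)
  have := hff.finiteDimensional_adjoin hz
  rw [← Module.rank_lt_aleph0_iff]
  refine lt_of_le_of_lt (rank_le (n := Module.finrank (IntermediateField.adjoin F {z}) K) ?_)
    Cardinal.natCast_lt_aleph0
  intro s hs
  choose w hw using fun a : s => Ideal.Quotient.mk_surjective (a : p.valRing ⧸ p.maxIdeal)
  have hli := linearIndependent_adjoin_of_coeff_zero hz (fun a : s => (w a : K)) (by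
    intro q hq
    have h1 : p.Ge (∑ a, algebraMap F K ((q a).coeff 0) * (w a : K)) 1 := by
      have h2 : ∑ a, algebraMap F K ((q a).coeff 0) * (w a : K)
          = ∑ a, -(Polynomial.aeval z (q a) - algebraMap F K ((q a).coeff 0)) * (w a : K) := by
        rw [← sub_eq_zero, ← Finset.sum_sub_distrib, ← hq]
        exact Finset.sum_congr rfl fun a _ => by ring
      rw [h2]
      refine Ge.sum fun a _ => ?_
      simpa using (Ge.aeval_sub_coeff_zero (Ge.of_le hz1.ge) (q a)).neg.mul (w a).2
    have h3 : ∑ a : s, (q a).coeff 0 • (a : p.valRing ⧸ p.maxIdeal) = 0 := by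
      have h4 : ∑ a : s, (q a).coeff 0 • (a : p.valRing ⧸ p.maxIdeal)
          = Ideal.Quotient.mk p.maxIdeal
            (∑ a : s, algebraMap F p.valRing ((q a).coeff 0) * w a) := by
        rw [map_sum]
        refine Finset.sum_congr rfl fun a _ => ?_
        rw [map_mul, hw, Algebra.smul_def]
        rfl
      rw [h4, Ideal.Quotient.eq_zero_iff_mem, mem_maxIdeal]
      rw [AddSubmonoidClass.coe_finsetSum]
      exact h1
    exact Fintype.linearIndependent_iff.1 hs _ h3)
  simpa using hli.fintype_card_le_finrank

theorem one_notMem_maxIdeal (p : FFPlace F K) : (1 : p.valRing) ∉ p.maxIdeal := by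
  rw [mem_maxIdeal]
  intro h
  have := h.le_ord one_ne_zero
  rw [show ((1 : p.valRing) : K) = 1 from rfl, ord_one] at this
  omega

theorem deg_pos (hff : IsFunctionField F K) (p : FFPlace F K) : 0 < p.deg := by
  have := finite_residue hff p
  have : Nontrivial (p.valRing ⧸ p.maxIdeal) := Ideal.Quotient.nontrivial_iff.2
    fun h => p.one_notMem_maxIdeal (h ▸ Submodule.mem_top)
  exact Module.finrank_pos

theorem ext_of_valRing {p p' : FFPlace F K} (h : ∀ y, p.Ge y 0 ↔ p'.Ge y 0) : p = p' := by
  obtain ⟨z, hz0, hz⟩ := p.exists_uniformizer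
  have hunit : ∀ y, y ≠ 0 → p.ord y = 0 → p'.ord y = 0 := by
    intro y hy hy0
    have h1 := ((h y).1 (Ge.of_le hy0.ge)).le_ord hy
    have h2 := ((h y⁻¹).1 (Ge.of_le (by rw [ord_inv]; omega))).le_ord (inv_ne_zero hy)
    rw [ord_inv] at h2
    omega
  have hzpow : ∀ (q : FFPlace F K) (n : ℤ), q.ord (z ^ n) = n * q.ord z := by
    intro q n
    cases n with
    | ofNat n => simp [ord_pow]
    | negSucc n => rw [zpow_negSucc, ord_inv, ord_pow, Int.negSucc_eq]; push_cast; ring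
  have hmul : ∀ y, y ≠ 0 → p'.ord y = p.ord y * p'.ord z := by
    intro y hy
    have h0 : z ^ (p.ord y) ≠ 0 := zpow_ne_zero _ hz0
    have h1 : y * z ^ (-p.ord y) ≠ 0 := mul_ne_zero hy (zpow_ne_zero _ hz0)
    have h2 := hunit _ h1 (by
      rw [p.ord_mul _ _ hy (zpow_ne_zero _ hz0), hzpow, hz]; ring)
    rw [p'.ord_mul _ _ hy (zpow_ne_zero _ hz0), hzpow] at h2
    linarith
  have hpos : 0 ≤ p'.ord z := ((h z).1 (Ge.of_le (by omega))).le_ord hz0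
  have hone : p'.ord z = 1 := by
    obtain ⟨u, hu0, hu⟩ := p'.exists_uniformizer
    rw [hmul u hu0] at hu
    exact Int.eq_one_of_mul_eq_one_left hpos hu
  have hord : p.ord = p'.ord := by
    funext y
    by_cases hy : y = 0
    · rw [hy, p.ord_zero, p'.ord_zero]
    · rw [hmul y hy, hone, mul_one]
  cases p
  cases p'
  congr

end FFPlace

theorem isPrincipalIdealRing_adjoin_singleton (F : Type) {K : Type} [Field F] [Field K]
    [Algebra F K] (z : K) : IsPrincipalIdealRing (Algebra.adjoin F {z}) := by
  have h : ∀ q : Polynomial F, Polynomial.aeval z q ∈ Algebra.adjoin F {z} := fun q => by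
    rw [Algebra.adjoin_singleton_eq_range_aeval]; exact ⟨q, rfl⟩
  refine IsPrincipalIdealRing.of_surjective
    ((Polynomial.aeval z).codRestrict (Algebra.adjoin F {z}) h) ?_
  rintro ⟨u, hu⟩
  have hu' := hu
  rw [Algebra.adjoin_singleton_eq_range_aeval] at hu'
  obtain ⟨q, hq⟩ := hu'
  exact ⟨q, Subtype.ext hq⟩

theorem isSeparable_adjoin [CharZero F] {z : K}
    [FiniteDimensional (IntermediateField.adjoin F {z}) K] :
    Algebra.IsSeparable (IntermediateField.adjoin F {z}) K := by
  have : CharZero (IntermediateField.adjoin F {z}) :=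
    charZero_of_injective_algebraMap (algebraMap F (IntermediateField.adjoin F {z})).injective
  infer_instance

section Model

variable {z : K} [FiniteDimensional (IntermediateField.adjoin F {z}) K]

variable (F z) in
theorem isFractionRing_integralClosure :
    IsFractionRing (integralClosure (Algebra.adjoin F {z}) K) K := by
  have := isPrincipalIdealRing_adjoin_singleton F z
  open scoped IntermediateField.algebraAdjoinAdjoin in
  exact integralClosure.isFractionRing_of_finite_extension (A := Algebra.adjoin F {z})
    (IntermediateField.adjoin F {z}) K

variable [CharZero F]

variable (F z) in
theorem isDedekindDomain_integralClosure :
    IsDedekindDomain (integralClosure (Algebra.adjoin F {z}) K) := by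
  have := isPrincipalIdealRing_adjoin_singleton F z
  have : Algebra.IsSeparable (IntermediateField.adjoin F {z}) K := isSeparable_adjoin
  open scoped IntermediateField.algebraAdjoinAdjoin in
  exact integralClosure.isDedekindDomain (Algebra.adjoin F {z})
    (IntermediateField.adjoin F {z}) K

variable (F z) in
theorem finite_integralClosure :
    Module.Finite (Algebra.adjoin F {z}) (integralClosure (Algebra.adjoin F {z}) K) := by
  have := isPrincipalIdealRing_adjoin_singleton F z
  have : Algebra.IsSeparable (IntermediateField.adjoin F {z}) K := isSeparable_adjoin
  open scoped IntermediateField.algebraAdjoinAdjoin in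
  exact IsIntegralClosure.finite (Algebra.adjoin F {z})
    (IntermediateField.adjoin F {z}) K _

end Model

namespace FFPlace

variable {p : FFPlace F K} {x y z : K} {i j : ℤ}

theorem Ge.of_mem_adjoin (hz : p.Ge z 0) (hy : y ∈ Algebra.adjoin F {z}) : p.Ge y 0 := by
  rw [Algebra.adjoin_singleton_eq_range_aeval] at hy
  obtain ⟨q, rfl⟩ := hy
  exact Ge.aeval hz q

theorem Ge.of_isIntegral (hz : p.Ge z 0) (hy : IsIntegral (Algebra.adjoin F {z}) y) :
    p.Ge y 0 := by
  let V : ValuationSubring K :=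
    { p.valRing with
      mem_or_inv_mem' := fun x => by
        change p.Ge x 0 ∨ p.Ge x⁻¹ 0
        by_cases hx : x = 0
        · exact Or.inl (Or.inl hx)
        · rw [Ge.inv_iff hx]
          rcases le_total 0 (p.ord x) with h | h
          · exact Or.inl (Or.inr h)
          · exact Or.inr (by simpa using h) }
  let f : Algebra.adjoin F {z} →+* V := (Algebra.algebraMap (Algebra.adjoin F {z}) K).codRestrict
    V.toSubring fun u => Ge.of_mem_adjoin hz u.2
  have hV : IsIntegral V y := by
    obtain ⟨q, hq, hq'⟩ := hy
    refine ⟨q.map f, hq.map f, ?_⟩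
    rw [Polynomial.eval₂_map]
    exact hq'
  obtain ⟨v, hv⟩ := IsIntegrallyClosed.isIntegral_iff.1 hV
  rw [← hv]
  exact v.2

/-- The place given by an adic valuation. -/
noncomputable def ofHeightOne {R : Type} [CommRing R] [IsDedekindDomain R] [Algebra R K]
    [IsFractionRing R K] (v : IsDedekindDomain.HeightOneSpectrum R)
    (hv : ∀ c : F, c ≠ 0 → v.valuation K (algebraMap F K c) = 1) : FFPlace F K where
  ord x := -WithZero.log (v.valuation K x)
  ord_zero := by simp
  ord_mul x y hx hy := by
    rw [map_mul, WithZero.log_mul ((Valuation.ne_zero_iff _).2 hx)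
      ((Valuation.ne_zero_iff _).2 hy)]
    ring
  ord_add x y hx hy hxy := by
    have hx' := (Valuation.ne_zero_iff (v.valuation K)).2 hx
    have hy' := (Valuation.ne_zero_iff (v.valuation K)).2 hy
    have hxy' := (Valuation.ne_zero_iff (v.valuation K)).2 hxy
    rcases le_max_iff.1 ((v.valuation K).map_add x y) with h | h
    · have := (WithZero.log_le_log hxy' hx').2 h
      exact (min_le_left _ _).trans (by omega)
    · have := (WithZero.log_le_log hxy' hy').2 h
      exact (min_le_right _ _).trans (by omega)
  ord_surj n := by
    obtain ⟨x, hx⟩ := v.valuation_surjective K (WithZero.exp (-n))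
    refine ⟨x, ?_, by rw [hx]; simp⟩
    rintro rfl
    rw [map_zero] at hx
    exact WithZero.exp_ne_zero hx.symm
  ord_algebraMap c hc := by rw [hv c hc]; simp

theorem ofHeightOne_ge {R : Type} [CommRing R] [IsDedekindDomain R] [Algebra R K]
    [IsFractionRing R K] (v : IsDedekindDomain.HeightOneSpectrum R)
    (hv : ∀ c : F, c ≠ 0 → v.valuation K (algebraMap F K c) = 1) (x : K) (i : ℤ) :
    (ofHeightOne v hv).Ge x i ↔ v.valuation K x ≤ WithZero.exp (-i) := by
  by_cases hx : x = 0
  · simp [hx, Ge]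
  · have hx' := (Valuation.ne_zero_iff (v.valuation K)).2 hx
    rw [← WithZero.log_le_iff_le_exp hx']
    constructor
    · intro h
      have := h.le_ord hx
      change i ≤ -WithZero.log (v.valuation K x) at this
      omega
    · intro h
      exact Or.inr (show i ≤ -WithZero.log (v.valuation K x) by omega)

variable [CharZero F] [FiniteDimensional (IntermediateField.adjoin F {z}) K]

/-- An element with no poles above the finite places of `F(z)` is integral over `F[z]`. -/
theorem isIntegral_of_ge (h : ∀ p : FFPlace F K, p.Ge z 0 → p.Ge y 0) :
    IsIntegral (Algebra.adjoin F {z}) y := by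
  have := isDedekindDomain_integralClosure F z
  have := isFractionRing_integralClosure F z
  have hmem : y ∈ Set.range (algebraMap (integralClosure (Algebra.adjoin F {z}) K) K) := by
    refine IsDedekindDomain.HeightOneSpectrum.mem_integers_of_valuation_le_one K y fun v => ?_
    have hle : ∀ u : K, IsIntegral (Algebra.adjoin F {z}) u → v.valuation K u ≤ 1 :=
      fun u hu => v.valuation_le_one (K := K) ⟨u, hu⟩
    have hF : ∀ c : F, v.valuation K (algebraMap F K c) ≤ 1 := fun c =>
      hle _ (isIntegral_algebraMap (x := algebraMap F (Algebra.adjoin F {z}) c))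
    have hv : ∀ c : F, c ≠ 0 → v.valuation K (algebraMap F K c) = 1 := by
      intro c hc
      have h2 := hF c⁻¹
      rw [map_inv₀, map_inv₀] at h2
      have h0 : v.valuation K (algebraMap F K c) ≠ 0 := by
        rw [Valuation.ne_zero_iff]
        simpa using hc
      exact le_antisymm (hF c) ((inv_le_one₀ (zero_lt_iff.2 h0)).1 h2)
    have hz : (ofHeightOne v hv).Ge z 0 := by
      rw [ofHeightOne_ge]
      exact hle z (isIntegral_algebraMap
        (x := (⟨z, Algebra.self_mem_adjoin_singleton F z⟩ : Algebra.adjoin F {z})))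
    simpa [ofHeightOne_ge] using h _ hz
  obtain ⟨u, rfl⟩ := hmem
  exact u.2

/-- The center of a place on the ring of integers over `F[z]`. -/
theorem exists_center (p : FFPlace F K) (hz : p.Ge z 0) :
    ∃ v : @IsDedekindDomain.HeightOneSpectrum (integralClosure (Algebra.adjoin F {z}) K) _,
      ∀ u, u ∈ v.asIdeal ↔ p.Ge (u : K) 1 := by
  have := isDedekindDomain_integralClosure F z
  have := isFractionRing_integralClosure F z
  have hnn : ∀ u : integralClosure (Algebra.adjoin F {z}) K, p.Ge (u : K) 0 :=
    fun u => Ge.of_isIntegral hz u.2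
  let I : Ideal (integralClosure (Algebra.adjoin F {z}) K) :=
    { carrier := {u | p.Ge (u : K) 1}
      zero_mem' := Ge.zero p 1
      add_mem' := fun ha hb => Ge.add ha hb
      smul_mem' := fun c u hu => by simpa using (hnn c).mul hu }
  have hI : ∀ u, u ∈ I ↔ p.Ge (u : K) 1 := fun _ => Iff.rfl
  have hprime : I.IsPrime := by
    refine ⟨fun h => ?_, fun {a b} hab => ?_⟩
    · have : (1 : integralClosure (Algebra.adjoin F {z}) K) ∈ I := h ▸ Submodule.mem_top
      have := ((hI _).1 this).le_ord one_ne_zero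
      rw [show ((1 : integralClosure (Algebra.adjoin F {z}) K) : K) = 1 from rfl, ord_one] at this
      omega
    · by_cases ha : (a : K) = 0
      · exact Or.inl (Or.inl ha)
      by_cases hb : (b : K) = 0
      · exact Or.inr (Or.inl hb)
      have h1 := ((hI _).1 hab).le_ord (by
        rw [Subalgebra.coe_mul]; exact mul_ne_zero ha hb)
      rw [Subalgebra.coe_mul, p.ord_mul _ _ ha hb] at h1
      have h2 := (hnn a).le_ord ha
      have h3 := (hnn b).le_ord hb
      by_cases h4 : 1 ≤ p.ord (a : K)
      · exact Or.inl (Or.inr h4)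
      · exact Or.inr (Or.inr (by omega))
  have hbot : I ≠ ⊥ := by
    obtain ⟨π, hπ0, hπ⟩ := p.exists_uniformizer
    obtain ⟨s, u, hu, hsu⟩ := IsFractionRing.div_surjective
      (A := integralClosure (Algebra.adjoin F {z}) K) π
    have hu0 : (u : K) ≠ 0 := by simpa using nonZeroDivisors.ne_zero hu
    have hs : (s : K) = π * u := by
      rw [← hsu]
      exact (div_mul_cancel₀ _ hu0).symm
    have hs0 : (s : K) ≠ 0 := hs ▸ mul_ne_zero hπ0 hu0
    have hsI : s ∈ I := by
      refine Or.inr ?_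
      rw [hs, p.ord_mul _ _ hπ0 hu0]
      have := (hnn u).le_ord hu0
      omega
    intro hbot
    rw [hbot] at hsI
    exact hs0 (by simpa using hsI)
  exact ⟨⟨I, hprime, hbot⟩, hI⟩

/-- Elements of the valuation ring are fractions of elements integral over `F[z]`. -/
theorem exists_integral_fraction (hz : p.Ge z 0) (hy : p.Ge y 0) :
    ∃ s u : K, IsIntegral (Algebra.adjoin F {z}) s ∧ IsIntegral (Algebra.adjoin F {z}) u ∧
      u ≠ 0 ∧ p.ord u = 0 ∧ y * u = s := by
  have := isDedekindDomain_integralClosure F z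
  have := isFractionRing_integralClosure F z
  obtain ⟨v, hv⟩ := exists_center p hz
  have hcompl : ∀ d : v.asIdeal.primeCompl, ((d : integralClosure (Algebra.adjoin F {z}) K) : K) ≠ 0
      ∧ p.ord ((d : integralClosure (Algebra.adjoin F {z}) K) : K) = 0 := by
    intro d
    have hd : ¬ p.Ge ((d : integralClosure (Algebra.adjoin F {z}) K) : K) 1 :=
      fun h => d.2 ((hv _).2 h)
    have h0 : ((d : integralClosure (Algebra.adjoin F {z}) K) : K) ≠ 0 := fun h => hd (Or.inl h)
    have h1 := (Ge.of_isIntegral hz (d : integralClosure (Algebra.adjoin F {z}) K).2).le_ord h0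
    exact ⟨h0, by by_contra h; exact hd (Or.inr (by omega))⟩
  obtain ⟨n, d, h | h⟩ := v.exists_primeCompl_mul_eq_or_mul_eq (K := K) y
  · exact ⟨n, d, n.2, (d : integralClosure (Algebra.adjoin F {z}) K).2, (hcompl d).1, (hcompl d).2, h⟩
  · change y * (n : K) = (d : integralClosure (Algebra.adjoin F {z}) K) at h
    have hyn : y * (n : K) ≠ 0 := h ▸ (hcompl d).1
    have hy0 := left_ne_zero_of_mul hyn
    have hn0 := right_ne_zero_of_mul hyn
    have h1 := p.ord_mul _ _ hy0 hn0
    rw [h, (hcompl d).2] at h1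
    have h2 := hy.le_ord hy0
    have h3 := (Ge.of_isIntegral hz n.2).le_ord hn0
    exact ⟨d, n, (d : integralClosure (Algebra.adjoin F {z}) K).2, n.2, hn0, by omega, h⟩

theorem finite_setOf_ord_ne_zero_of_ge (hy : y ≠ 0) :
    {p : FFPlace F K | p.Ge z 0 ∧ p.ord y ≠ 0}.Finite := by
  have := isDedekindDomain_integralClosure F z
  have := isFractionRing_integralClosure F z
  obtain ⟨s, u, hu, hsu⟩ := IsFractionRing.div_surjective
    (A := integralClosure (Algebra.adjoin F {z}) K) y
  have hu0 : u ≠ 0 := nonZeroDivisors.ne_zero hu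
  have hu0' : (u : K) ≠ 0 := by simpa using hu0
  have hs : (s : K) = y * u := by
    rw [← hsu]
    exact (div_mul_cancel₀ _ hu0').symm
  have hs0' : (s : K) ≠ 0 := hs ▸ mul_ne_zero hy hu0'
  have hs0 : s ≠ 0 := fun h => hs0' (by simp [h])
  rcases Set.eq_empty_or_nonempty {p : FFPlace F K | p.Ge z 0 ∧ p.ord y ≠ 0} with
    hemp | ⟨p₀, hp₀, -⟩
  · rw [hemp]; exact Set.finite_empty
  have : Nonempty
      (@IsDedekindDomain.HeightOneSpectrum (integralClosure (Algebra.adjoin F {z}) K) _) :=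
    ⟨(exists_center p₀ hp₀).choose⟩
  choose! ctr hctr using fun (p : FFPlace F K) (h : p.Ge z 0) => exists_center p h
  have hinj : Set.InjOn ctr {p : FFPlace F K | p.Ge z 0} := by
    intro p hp q hq hpq
    have h1 : ∀ w, IsIntegral (Algebra.adjoin F {z}) w → (p.Ge w 1 ↔ q.Ge w 1) := by
      intro w hw
      rw [← hctr p hp ⟨w, hw⟩, ← hctr q hq ⟨w, hw⟩, hpq]
    have key : ∀ p q : FFPlace F K, p.Ge z 0 → q.Ge z 0 →
        (∀ w, IsIntegral (Algebra.adjoin F {z}) w → (p.Ge w 1 ↔ q.Ge w 1)) →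
        ∀ w, p.Ge w 0 → q.Ge w 0 := by
      intro p q hp hq h w hw
      by_cases hw0 : w = 0
      · exact Or.inl hw0
      obtain ⟨s, u, hs, hu, hu0, hu1, rfl⟩ := exists_integral_fraction hp hw
      have h2 : q.ord u = 0 := by
        have h3 : ¬ q.Ge u 1 := fun h4 => by
          have := ((h u hu).2 h4).le_ord hu0
          omega
        have h5 := (Ge.of_isIntegral hq hu).le_ord hu0
        by_contra h6
        exact h3 (Or.inr (by omega))
      have h7 := (Ge.of_isIntegral hq hs).le_ord (mul_ne_zero hw0 hu0)
      rw [q.ord_mul _ _ hw0 hu0] at h7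
      exact Or.inr (by omega)
    exact ext_of_valRing fun w => ⟨key p q hp hq h1 w, key q p hq hp (fun w hw => (h1 w hw).symm) w⟩
  have hfin : ∀ w : integralClosure (Algebra.adjoin F {z}) K, w ≠ 0 →
      {p : FFPlace F K | p.Ge z 0 ∧ p.Ge (w : K) 1}.Finite := by
    intro w hw
    have h1 : {v : @IsDedekindDomain.HeightOneSpectrum (integralClosure (Algebra.adjoin F {z}) K) _ |
        v.asIdeal ∣ Ideal.span {w}}.Finite :=
      Ideal.finite_factors (by simpa using hw)
    refine Set.Finite.of_finite_image (f := ctr) (h1.subset ?_) (hinj.mono fun p hp => hp.1)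
    rintro _ ⟨p, ⟨hp, hpw⟩, rfl⟩
    rw [Set.mem_ofPred_eq, Ideal.dvd_span_singleton, hctr p hp]
    exact hpw
  refine ((hfin s hs0).union (hfin u hu0)).subset ?_
  rintro p ⟨hp, hpy⟩
  have h1 := p.ord_mul _ _ hy hu0'
  rw [← hs] at h1
  have h2 := (Ge.of_isIntegral hp s.2).le_ord hs0'
  have h3 := (Ge.of_isIntegral hp u.2).le_ord hu0'
  by_cases h4 : 1 ≤ p.ord (s : K)
  · exact Or.inl ⟨hp, Or.inr h4⟩
  · exact Or.inr ⟨hp, Or.inr (by omega)⟩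

end FFPlace

theorem divDeg_zero : divDeg (0 : FFPlace F K →₀ ℤ) = 0 := Finsupp.sum_zero_index

theorem divDeg_add (A B : FFPlace F K →₀ ℤ) : divDeg (A + B) = divDeg A + divDeg B :=
  Finsupp.sum_add_index' (fun _ => by simp) fun _ _ _ => by ring

theorem divDeg_neg (A : FFPlace F K →₀ ℤ) : divDeg (-A) = -divDeg A := by
  have h := divDeg_add A (-A)
  rw [add_neg_cancel, divDeg_zero] at h
  linarith

theorem divDeg_sub (A B : FFPlace F K →₀ ℤ) : divDeg (A - B) = divDeg A - divDeg B := by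
  rw [sub_eq_add_neg, divDeg_add, divDeg_neg, sub_eq_add_neg]

theorem divDeg_nsmul (n : ℕ) (A : FFPlace F K →₀ ℤ) : divDeg (n • A) = n * divDeg A := by
  induction n with
  | zero => simp [divDeg_zero]
  | succ n ih => rw [succ_nsmul, divDeg_add, ih]; push_cast; ring

theorem divDeg_single (p : FFPlace F K) (n : ℤ) :
    divDeg (Finsupp.single p n) = n * p.deg := Finsupp.sum_single_index (by simp)

theorem divDeg_nonneg {A : FFPlace F K →₀ ℤ} (hA : 0 ≤ A) : 0 ≤ divDeg A :=
  Finset.sum_nonneg fun p _ => mul_nonneg (hA p) (Int.natCast_nonneg _)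

theorem divDeg_eq_sum (A : FFPlace F K →₀ ℤ) (s : Finset (FFPlace F K))
    (h : ∀ p, A p ≠ 0 → p ∈ s) : divDeg A = ∑ p ∈ s, A p * p.deg :=
  Finsupp.sum_of_support_subset A (fun p hp => h p (Finsupp.mem_support_iff.1 hp)) _
    fun p _ => by simp

theorem mem_RRspace_iff {A : FFPlace F K →₀ ℤ} {f : K} :
    f ∈ RRspace A ↔ ∀ p : FFPlace F K, p.Ge f (-(A p)) := by
  constructor
  · rintro (rfl | h) p
    · exact Or.inl rfl
    · exact Or.inr (h p)
  · intro h
    by_cases hf : f = 0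
    · exact Or.inl hf
    · exact Or.inr fun p => (h p).le_ord hf

theorem RRspace_mono {A B : FFPlace F K →₀ ℤ} (h : A ≤ B) : RRspace A ≤ RRspace B := by
  intro f hf
  rw [mem_RRspace_iff] at hf ⊢
  exact fun p => (hf p).mono (neg_le_neg (h p))

open scoped IntermediateField.algebraAdjoinAdjoin in
theorem IsFunctionField.exists_pole [CharZero F] (hff : IsFunctionField F K) {y : K}
    (hy : Transcendental F y) : ∃ p : FFPlace F K, p.ord y < 0 := by
  by_contra! h
  have hz : Transcendental F y⁻¹ := fun h => hy (by simpa using h.inv)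
  have hy0 : y ≠ 0 := fun h0 => hy (h0 ▸ isAlgebraic_zero)
  have := hff.finiteDimensional_adjoin hz
  have hy_int : IsIntegral (Algebra.adjoin F {y⁻¹}) y :=
    FFPlace.isIntegral_of_ge fun p _ => Or.inr (h p)
  have := isPrincipalIdealRing_adjoin_singleton F y⁻¹
  have hymem : y ∈ IntermediateField.adjoin F {y⁻¹} := by
    simpa using inv_mem (IntermediateField.mem_adjoin_simple_self F y⁻¹)
  have hy_int' : IsIntegral (Algebra.adjoin F {y⁻¹})
      (⟨y, hymem⟩ : IntermediateField.adjoin F {y⁻¹}) := by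
    exact (isIntegral_algebraMap_iff (B := K)
      (algebraMap (IntermediateField.adjoin F {y⁻¹}) K).injective).1 hy_int
  obtain ⟨⟨u, hu⟩, hu'⟩ := IsIntegrallyClosed.isIntegral_iff.1 hy_int'
  have hu'' : u = y := congrArg Subtype.val hu'
  rw [hu'', Algebra.adjoin_singleton_eq_range_aeval] at hu
  obtain ⟨q, hq⟩ := hu
  refine hz ⟨Polynomial.X * q - 1, ?_, ?_⟩
  · intro h0
    have := congrArg (Polynomial.coeff · 0) h0
    simp at this
  · have : Polynomial.aeval y⁻¹ q = y := hq
    rw [map_sub, map_mul, Polynomial.aeval_X, this, map_one, inv_mul_cancel₀ hy0, sub_self]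

theorem IsFunctionField.finite_ord_ne_zero [CharZero F] (hff : IsFunctionField F K) {y : K}
    (hy : y ≠ 0) : {p : FFPlace F K | p.ord y ≠ 0}.Finite := by
  obtain ⟨t, ht, hfin⟩ := id hff
  have ht' : Transcendental F t⁻¹ := fun h => ht (by simpa using h.inv)
  have ht0 : t ≠ 0 := fun h0 => ht (h0 ▸ isAlgebraic_zero)
  have := hff.finiteDimensional_adjoin ht'
  refine ((FFPlace.finite_setOf_ord_ne_zero_of_ge (z := t) hy).union
    (FFPlace.finite_setOf_ord_ne_zero_of_ge (z := t⁻¹) hy)).subset fun p hp => ?_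
  rcases le_total 0 (p.ord t) with h | h
  · exact Or.inl ⟨Or.inr h, hp⟩
  · exact Or.inr ⟨Or.inr (by rw [FFPlace.ord_inv]; omega), hp⟩

/-- The divisor of a function (zero unless its support is finite). -/
noncomputable def principalDiv (y : K) : FFPlace F K →₀ ℤ := by
  classical
  exact if h : {p : FFPlace F K | p.ord y ≠ 0}.Finite then
    Finsupp.ofSupportFinite (fun p => p.ord y) h else 0

theorem IsFunctionField.principalDiv_apply [CharZero F] (hff : IsFunctionField F K) {y : K}
    (hy : y ≠ 0) (p : FFPlace F K) : principalDiv y p = p.ord y := by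
  rw [principalDiv, dif_pos (hff.finite_ord_ne_zero hy)]
  rfl

theorem mem_range_of_ge_zero [CharZero F] (hff : IsFunctionField F K) (hcf : IsConstantField F K)
    {y : K} (hy : ∀ p : FFPlace F K, p.Ge y 0) : y ∈ (algebraMap F K).range := by
  by_cases hy0 : y = 0
  · exact hy0 ▸ zero_mem _
  refine hcf y ?_
  by_contra h
  obtain ⟨p, hp⟩ := hff.exists_pole h
  have := (hy p).le_ord hy0
  omega

theorem RRspace_zero [CharZero F] (hff : IsFunctionField F K) (hcf : IsConstantField F K) :
    RRspace (0 : FFPlace F K →₀ ℤ) = Submodule.span F {(1 : K)} := by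
  ext f
  rw [mem_RRspace_iff, Submodule.mem_span_singleton]
  constructor
  · intro h
    obtain ⟨c, rfl⟩ := mem_range_of_ge_zero hff hcf (y := f) (by simpa using h)
    exact ⟨c, by rw [Algebra.smul_def, mul_one]⟩
  · rintro ⟨c, rfl⟩ p
    rw [Algebra.smul_def, mul_one]
    simpa using FFPlace.Ge.algebraMap p c

theorem RRspace_add_single (hff : IsFunctionField F K) (A : FFPlace F K →₀ ℤ) (p : FFPlace F K)
    [FiniteDimensional F (RRspace A)] :
    FiniteDimensional F (RRspace (A + Finsupp.single p 1)) ∧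
      ellDim (A + Finsupp.single p 1) ≤ ellDim A + p.deg := by
  classical
  have := FFPlace.finite_residue hff p
  obtain ⟨z, hz0, hz⟩ := p.ord_surj (A p + 1)
  set B := A + Finsupp.single p 1 with hB
  have hAB : RRspace A ≤ RRspace B := RRspace_mono (by
    rw [hB]; exact le_add_of_nonneg_right (Finsupp.single_nonneg.2 zero_le_one))
  have hBp : B p = A p + 1 := by simp [hB]
  have hmem : ∀ f : RRspace B, p.Ge ((f : K) * z) 0 := by
    intro f
    have := ((mem_RRspace_iff.1 f.2) p).mul (FFPlace.Ge.of_le hz.ge)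
    rw [hBp] at this
    simpa using this
  let φ : RRspace B →ₗ[F] p.valRing ⧸ p.maxIdeal :=
    { toFun := fun f => Ideal.Quotient.mk p.maxIdeal ⟨(f : K) * z, hmem f⟩
      map_add' := fun f g => by
        rw [← map_add]
        congr 1
        exact Subtype.ext (add_mul _ _ _)
      map_smul' := fun c f => by
        rw [RingHom.id_apply, Algebra.smul_def]
        change _ = Ideal.Quotient.mk p.maxIdeal (algebraMap F p.valRing c) * _
        rw [← map_mul]
        congr 1
        refine Subtype.ext ?_
        change (c • (f : K)) * z = algebraMap F K c * ((f : K) * z)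
        rw [Algebra.smul_def, mul_assoc] }
  have hker : LinearMap.ker φ = (RRspace A).submoduleOf (RRspace B) := by
    ext f
    rw [LinearMap.mem_ker]
    change Ideal.Quotient.mk p.maxIdeal ⟨(f : K) * z, hmem f⟩ = 0 ↔ (f : K) ∈ RRspace A
    rw [Ideal.Quotient.eq_zero_iff_mem, FFPlace.mem_maxIdeal]
    change p.Ge ((f : K) * z) 1 ↔ _
    by_cases hf0 : (f : K) = 0
    · rw [hf0, zero_mul]
      exact ⟨fun _ => zero_mem _, fun _ => Or.inl rfl⟩
    constructor
    · intro h
      have h1 := h.le_ord (mul_ne_zero hf0 hz0)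
      rw [p.ord_mul _ _ hf0 hz0, hz] at h1
      refine Or.inr fun q => ?_
      by_cases hq : q = p
      · subst hq; omega
      · have := ((mem_RRspace_iff.1 f.2) q).le_ord hf0
        have hBq : B q = A q := by simp [hB, Ne.symm hq]
        rwa [hBq] at this
    · intro h
      have h1 := ((mem_RRspace_iff.1 h) p).le_ord hf0
      refine Or.inr ?_
      rw [p.ord_mul _ _ hf0 hz0, hz]
      omega
  have e : LinearMap.ker φ ≃ₗ[F] RRspace A :=
    (LinearEquiv.ofEq _ _ hker).trans (Submodule.submoduleOfEquivOfLe hAB)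
  have hkf : Module.Finite F (LinearMap.ker φ) := Module.Finite.equiv e.symm
  have hfin : FiniteDimensional F (RRspace B) := by
    have : Module.Finite F (RRspace B ⧸ LinearMap.ker φ) :=
      Module.Finite.equiv φ.quotKerEquivRange.symm
    exact Module.Finite.of_submodule_quotient (LinearMap.ker φ)
  refine ⟨hfin, ?_⟩
  have h1 := φ.finrank_range_add_finrank_ker
  have h2 : Module.finrank F (LinearMap.range φ) ≤ p.deg := Submodule.finrank_le _
  rw [e.finrank_eq] at h1
  change Module.finrank F (RRspace B) ≤ Module.finrank F (RRspace A) + _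
  omega

theorem RRspace_le (hff : IsFunctionField F K) {A B : FFPlace F K →₀ ℤ} (hAB : A ≤ B)
    [hA : FiniteDimensional F (RRspace A)] :
    FiniteDimensional F (RRspace B) ∧ (ellDim B : ℤ) ≤ ellDim A + divDeg B - divDeg A := by
  let ψ : (FFPlace F K →₀ ℕ) →+ (FFPlace F K →₀ ℤ) :=
    Finsupp.mapRange.addMonoidHom (Nat.castAddMonoidHom ℤ)
  have key : ∀ D : FFPlace F K →₀ ℕ, ∀ A : FFPlace F K →₀ ℤ, FiniteDimensional F (RRspace A) →
      FiniteDimensional F (RRspace (A + ψ D)) ∧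
        (ellDim (A + ψ D) : ℤ) ≤ ellDim A + divDeg (ψ D) := by
    intro D
    have hadd : ∀ D E : FFPlace F K →₀ ℕ, (∀ A : FFPlace F K →₀ ℤ,
        FiniteDimensional F (RRspace A) → FiniteDimensional F (RRspace (A + ψ D)) ∧
        (ellDim (A + ψ D) : ℤ) ≤ ellDim A + divDeg (ψ D)) → (∀ A : FFPlace F K →₀ ℤ,
        FiniteDimensional F (RRspace A) → FiniteDimensional F (RRspace (A + ψ E)) ∧
        (ellDim (A + ψ E) : ℤ) ≤ ellDim A + divDeg (ψ E)) → ∀ A : FFPlace F K →₀ ℤ,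
        FiniteDimensional F (RRspace A) → FiniteDimensional F (RRspace (A + ψ (D + E))) ∧
        (ellDim (A + ψ (D + E)) : ℤ) ≤ ellDim A + divDeg (ψ (D + E)) := by
      intro D E hD hE A hA
      obtain ⟨h1, h2⟩ := hD A hA
      obtain ⟨h3, h4⟩ := hE _ h1
      rw [map_add, ← add_assoc, divDeg_add]
      exact ⟨h3, by linarith⟩
    have hzero : ∀ A : FFPlace F K →₀ ℤ, FiniteDimensional F (RRspace A) →
        FiniteDimensional F (RRspace (A + ψ 0)) ∧
        (ellDim (A + ψ 0) : ℤ) ≤ ellDim A + divDeg (ψ 0) := by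
      intro A hA
      rw [map_zero, add_zero, divDeg_zero, add_zero]
      exact ⟨hA, le_rfl⟩
    induction D using Finsupp.induction_linear with
    | zero => exact hzero
    | add D E hD hE => exact hadd D E hD hE
    | single p n =>
      induction n with
      | zero => rw [Finsupp.single_zero]; exact hzero
      | succ n ih =>
        rw [Finsupp.single_add]
        refine hadd _ _ ih fun A hA => ?_
        have h : ψ (Finsupp.single p 1) = Finsupp.single p 1 := by simp [ψ]
        rw [h, divDeg_single]
        have := RRspace_add_single hff A p
        exact ⟨this.1, by have := this.2; linarith [(Nat.cast_le (α := ℤ)).2 this]⟩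
  have hψ : B = A + ψ ((B - A).mapRange Int.toNat rfl) := by
    ext p
    have := hAB p
    simp [ψ]
    omega
  have := key ((B - A).mapRange Int.toNat rfl) A hA
  rw [← hψ] at this
  refine ⟨this.1, ?_⟩
  have h2 := congrArg divDeg hψ
  rw [divDeg_add] at h2
  linarith [this.2]

theorem ellDim_zero [CharZero F] (hff : IsFunctionField F K) (hcf : IsConstantField F K) :
    ellDim (0 : FFPlace F K →₀ ℤ) = 1 := by
  rw [ellDim, RRspace_zero hff hcf, finrank_span_singleton one_ne_zero]

theorem finiteDimensional_RRspace [CharZero F] (hff : IsFunctionField F K)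
    (hcf : IsConstantField F K) (A : FFPlace F K →₀ ℤ) : FiniteDimensional F (RRspace A) := by
  have h0 : FiniteDimensional F (RRspace (0 : FFPlace F K →₀ ℤ)) := by
    rw [RRspace_zero hff hcf]; infer_instance
  have h1 := (RRspace_le hff (le_sup_right : (0 : FFPlace F K →₀ ℤ) ≤ A ⊔ 0)).1
  exact Submodule.finiteDimensional_of_le (RRspace_mono (le_sup_left : A ≤ A ⊔ 0))

theorem ellDim_le_of_le [CharZero F] (hff : IsFunctionField F K) (hcf : IsConstantField F K)
    {A B : FFPlace F K →₀ ℤ} (h : A ≤ B) : (ellDim B : ℤ) ≤ ellDim A + divDeg B - divDeg A :=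
  have := finiteDimensional_RRspace hff hcf A
  (RRspace_le hff h).2

theorem divDeg_principalDiv_le [CharZero F] (hff : IsFunctionField F K)
    (hcf : IsConstantField F K) {g : ℤ}
    (hR : ∀ A : FFPlace F K →₀ ℤ, divDeg A - ellDim A + 1 ≤ g) {y : K} (hy : y ≠ 0) :
    divDeg (principalDiv y : FFPlace F K →₀ ℤ) ≤ 0 := by
  by_contra! hpos
  have hell : ∀ n : ℕ, ellDim (n • (principalDiv y : FFPlace F K →₀ ℤ)) ≤ 1 := by
    intro n
    have hle : RRspace (n • (principalDiv y : FFPlace F K →₀ ℤ))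
        ≤ Submodule.span F {(y ^ n)⁻¹} := by
      intro f hf
      rw [mem_RRspace_iff] at hf
      obtain ⟨c, hc⟩ := mem_range_of_ge_zero hff hcf (y := f * y ^ n) fun p => by
        have h1 := (hf p).mul (FFPlace.Ge.of_le (x := y ^ n) (p.ord_pow y n).ge)
        simpa [hff.principalDiv_apply hy] using h1
      rw [Submodule.mem_span_singleton]
      refine ⟨c, ?_⟩
      rw [Algebra.smul_def, hc, mul_assoc, mul_inv_cancel₀ (pow_ne_zero n hy), mul_one]
    exact (Submodule.finrank_mono hle).trans (finrank_span_le_card _ |>.trans (by simp))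
  have h1 := hR ((g.toNat + 1) • (principalDiv y : FFPlace F K →₀ ℤ))
  rw [divDeg_nsmul] at h1
  have h2 := hell (g.toNat + 1)
  have h3 := Int.self_le_toNat g
  push_cast at h1
  nlinarith

theorem divDeg_principalDiv [CharZero F] (hff : IsFunctionField F K)
    (hcf : IsConstantField F K) {g : ℤ}
    (hR : ∀ A : FFPlace F K →₀ ℤ, divDeg A - ellDim A + 1 ≤ g) {y : K} (hy : y ≠ 0) :
    divDeg (principalDiv y : FFPlace F K →₀ ℤ) = 0 := by
  refine le_antisymm (divDeg_principalDiv_le hff hcf hR hy) ?_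
  have h1 := divDeg_principalDiv_le hff hcf hR (inv_ne_zero hy)
  have h2 : (principalDiv y⁻¹ : FFPlace F K →₀ ℤ) = -principalDiv y := by
    ext p
    rw [Finsupp.neg_apply, hff.principalDiv_apply hy, hff.principalDiv_apply (inv_ne_zero hy),
      FFPlace.ord_inv]
  rw [h2, divDeg_neg] at h1
  linarith

theorem sum_ord_mul_deg [CharZero F] (hff : IsFunctionField F K)
    (hcf : IsConstantField F K) {g : ℤ}
    (hR : ∀ A : FFPlace F K →₀ ℤ, divDeg A - ellDim A + 1 ≤ g) {y : K} (hy : y ≠ 0)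
    (s : Finset (FFPlace F K)) (hs : ∀ p : FFPlace F K, p.ord y ≠ 0 → p ∈ s) :
    ∑ p ∈ s, p.ord y * p.deg = 0 := by
  rw [← divDeg_principalDiv hff hcf hR hy, divDeg_eq_sum _ s]
  · exact Finset.sum_congr rfl fun p _ => by rw [hff.principalDiv_apply hy]
  · intro p hp
    rw [hff.principalDiv_apply hy] at hp
    exact hs p hp

theorem ellDim_eq_zero_of_neg [CharZero F] (hff : IsFunctionField F K)
    (hcf : IsConstantField F K) {g : ℤ}
    (hR : ∀ A : FFPlace F K →₀ ℤ, divDeg A - ellDim A + 1 ≤ g) {B : FFPlace F K →₀ ℤ}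
    (hB : divDeg B < 0) : ellDim B = 0 := by
  have : RRspace B = ⊥ := by
    rw [Submodule.eq_bot_iff]
    intro f hf
    by_contra hf0
    have h1 : 0 ≤ principalDiv f + B := fun p => by
      have := ((mem_RRspace_iff.1 hf) p).le_ord hf0
      rw [Finsupp.add_apply, hff.principalDiv_apply hf0, Finsupp.zero_apply]
      omega
    have h2 := divDeg_nonneg h1
    rw [divDeg_add, divDeg_principalDiv hff hcf hR hf0] at h2
    omega
  rw [ellDim, this, finrank_bot]

/-- The divisor of zeros of a function. -/
noncomputable def zeroDiv (y : K) : FFPlace F K →₀ ℤ := principalDiv y ⊔ 0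

theorem zeroDiv_nonneg (y : K) : (0 : FFPlace F K →₀ ℤ) ≤ zeroDiv y := le_sup_right

theorem IsFunctionField.zeroDiv_apply [CharZero F] (hff : IsFunctionField F K) {y : K}
    (hy : y ≠ 0) (p : FFPlace F K) : zeroDiv y p = max (p.ord y) 0 := by
  rw [zeroDiv, Finsupp.sup_apply, hff.principalDiv_apply hy, Finsupp.zero_apply]

theorem divDeg_pos (hff : IsFunctionField F K) {A : FFPlace F K →₀ ℤ} (hA : 0 ≤ A)
    (h0 : A ≠ 0) : 0 < divDeg A := by
  obtain ⟨p, hp⟩ := Finsupp.ne_iff.1 h0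
  refine Finset.sum_pos' (fun q _ => mul_nonneg (hA q) (Int.natCast_nonneg _))
    ⟨p, Finsupp.mem_support_iff.2 hp, ?_⟩
  have h1 : 0 ≤ A p := hA p
  have h2 : 0 < p.deg := p.deg_pos hff
  exact mul_pos (lt_of_le_of_ne h1 (Ne.symm hp)) (by exact_mod_cast h2)

theorem divDeg_zeroDiv_pos [CharZero F] (hff : IsFunctionField F K) {s : K}
    (hs : Transcendental F s) : 0 < divDeg (zeroDiv s : FFPlace F K →₀ ℤ) := by
  have hs0 : s ≠ 0 := fun h0 => hs (h0 ▸ isAlgebraic_zero)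
  refine divDeg_pos hff (zeroDiv_nonneg s) ?_
  obtain ⟨p, hp⟩ := hff.exists_pole (y := s⁻¹) fun h => hs (by simpa using h.inv)
  rw [FFPlace.ord_inv] at hp
  intro h
  have := hff.zeroDiv_apply hs0 p
  rw [h, Finsupp.zero_apply] at this
  omega

/-- The `F(s)`-span of a Riemann–Roch space. -/
noncomputable def RRspan (s : K) (B : FFPlace F K →₀ ℤ) :
    Submodule (IntermediateField.adjoin F {s}) K :=
  Submodule.span _ (RRspace B : Set K)

theorem ellDim_le_add_finrank_RRspan [CharZero F] (hff : IsFunctionField F K)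
    (hcf : IsConstantField F K) {s : K} (hs : Transcendental F s) (B : FFPlace F K →₀ ℤ) :
    ellDim B ≤ ellDim (B - zeroDiv s) +
      Module.finrank (IntermediateField.adjoin F {s}) (RRspan s B) := by
  have := hff.finiteDimensional_adjoin hs
  have hs0 : s ≠ 0 := fun h0 => hs (h0 ▸ isAlgebraic_zero)
  have := finiteDimensional_RRspace hff hcf B
  set U : Submodule F (RRspace B) := (RRspace (B - zeroDiv s)).submoduleOf (RRspace B) with hU
  have hle : RRspace (B - zeroDiv s) ≤ RRspace B :=
    RRspace_mono (sub_le_self _ (zeroDiv_nonneg s))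
  have h1 := Submodule.finrank_quotient_add_finrank U
  have h2 : Module.finrank F U = ellDim (B - zeroDiv s) :=
    (Submodule.submoduleOfEquivOfLe hle).finrank_eq
  let b := Module.finBasis F (RRspace B ⧸ U)
  choose w hw using fun i => Submodule.Quotient.mk_surjective U (b i)
  have hli := linearIndependent_adjoin_of_coeff_zero hs (fun i => (w i : K)) (by
    intro q hq
    have h3 : ∑ i, (q i).coeff 0 • w i ∈ U := by
      change ((∑ i, (q i).coeff 0 • w i : RRspace B) : K) ∈ RRspace (B - zeroDiv s)
      rw [AddSubmonoidClass.coe_finsetSum, mem_RRspace_iff]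
      intro p
      rw [Finsupp.sub_apply, hff.zeroDiv_apply hs0]
      by_cases hp : p.ord s ≤ 0
      · refine FFPlace.Ge.sum fun i _ => ?_
        have := ((mem_RRspace_iff.1 ((q i).coeff 0 • w i).2) p)
        rwa [max_eq_right hp, sub_zero]
      · have h4 : ∑ i, (((q i).coeff 0 • w i : RRspace B) : K)
            = ∑ i, -(s * Polynomial.aeval s (q i).divX) * (w i : K) := by
          rw [← sub_eq_zero, ← Finset.sum_sub_distrib, ← hq]
          refine Finset.sum_congr rfl fun i _ => ?_
          have h5 := congrArg (Polynomial.aeval s) (Polynomial.divX_mul_X_add (q i))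
          rw [map_add, map_mul, Polynomial.aeval_X, Polynomial.aeval_C] at h5
          rw [← h5, SetLike.val_smul, Algebra.smul_def]
          ring
        rw [h4]
        refine FFPlace.Ge.sum fun i _ => ?_
        have h6 : p.Ge (s * Polynomial.aeval s (q i).divX) (p.ord s + 0) :=
          (FFPlace.Ge.of_le le_rfl).mul (FFPlace.Ge.aeval (FFPlace.Ge.of_le (by omega)) _)
        refine (h6.neg.mul ((mem_RRspace_iff.1 (w i).2) p)).mono ?_
        rw [max_eq_left (by omega)]
        omega
    have h7 : ∑ i, (q i).coeff 0 • b i = 0 := by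
      rw [← (Submodule.Quotient.mk_eq_zero U).2 h3, ← Submodule.mkQ_apply, map_sum]
      refine Finset.sum_congr rfl fun i _ => ?_
      rw [map_smul, Submodule.mkQ_apply, hw]
    exact Fintype.linearIndependent_iff.1 b.linearIndependent _ h7)
  have hmem : ∀ i, (w i : K) ∈ RRspan s B := fun i => Submodule.subset_span (w i).2
  have hli' : LinearIndependent (IntermediateField.adjoin F {s})
      (fun i => (⟨w i, hmem i⟩ : RRspan s B)) :=
    LinearIndependent.of_comp (RRspan s B).subtype hli
  have h8 := hli'.fintype_card_le_finrank
  rw [Fintype.card_fin] at h8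
  change Module.finrank F (RRspace B) ≤ _
  omega

theorem finrank_RRspan_le [CharZero F] (hff : IsFunctionField F K) {s : K}
    (hs : Transcendental F s) (B : FFPlace F K →₀ ℤ) :
    Module.finrank (IntermediateField.adjoin F {s}) (RRspan s B)
      ≤ Module.finrank (IntermediateField.adjoin F {s}) K :=
  have := hff.finiteDimensional_adjoin hs
  Submodule.finrank_le _

open Polynomial in
theorem Transcendental.linearIndependent_pow_fin {R : Type} [CommRing R] [Algebra F R] {t : R}
    (ht : Transcendental F t) (n : ℕ) : LinearIndependent F (fun j : Fin n => t ^ (j : ℕ)) := by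
  have h1 : LinearIndependent F (fun j : Fin n => (X : F[X]) ^ (j : ℕ)) := by
    have h2 := (Polynomial.basisMonomials F).linearIndependent.comp (fun j : Fin n => (j : ℕ))
      Fin.val_injective
    convert h2 using 2 with j
    simp [Polynomial.coe_basisMonomials, Polynomial.X_pow_eq_monomial]
  have h3 := h1.map' (Polynomial.aeval t).toLinearMap
    (LinearMap.ker_eq_bot.2 (transcendental_iff_injective.1 ht))
  have h4 : (Polynomial.aeval t).toLinearMap ∘ (fun j : Fin n => (X : F[X]) ^ (j : ℕ))
      = fun j : Fin n => t ^ (j : ℕ) := by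
    funext j
    simp
  rwa [h4] at h3

theorem adjoin_inv_singleton (s : K) :
    IntermediateField.adjoin F {s⁻¹} = IntermediateField.adjoin F {s} := by
  apply le_antisymm <;> refine IntermediateField.adjoin_simple_le_iff.2 ?_
  · exact inv_mem (IntermediateField.mem_adjoin_simple_self F s)
  · simpa using inv_mem (IntermediateField.mem_adjoin_simple_self F s⁻¹)

/-- The degree of `K` over `F(s)` is at most the degree of the divisor of zeros of `s`. -/
theorem finrank_adjoin_le_divDeg_zeroDiv [CharZero F] (hff : IsFunctionField F K)
    (hcf : IsConstantField F K) {s : K} (hs : Transcendental F s) :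
    (Module.finrank (IntermediateField.adjoin F {s}) K : ℤ) ≤ divDeg (zeroDiv (F := F) s) := by
  have := hff.finiteDimensional_adjoin hs
  have hs0 : s ≠ 0 := fun h0 => hs (h0 ▸ isAlgebraic_zero)
  set L := IntermediateField.adjoin F {s}
  set d := Module.finrank L K with hd
  let w := Module.finBasis L K
  let C : FFPlace F K →₀ ℤ := ∑ i, (-principalDiv (w i)) ⊔ 0
  have hC : 0 ≤ C := Finset.sum_nonneg fun i _ => le_sup_right
  have hwC : ∀ i, ∀ p : FFPlace F K, p.Ge (w i) (-(C p)) := by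
    intro i p
    refine FFPlace.Ge.of_le ?_
    have h1 : (-principalDiv (w i)) ⊔ 0 ≤ C :=
      Finset.single_le_sum (f := fun i => (-principalDiv (w i)) ⊔ 0)
        (fun i _ => le_sup_right) (Finset.mem_univ i)
    have h2 := le_trans le_sup_left h1 p
    rw [Finsupp.neg_apply, hff.principalDiv_apply (w.ne_zero i)] at h2
    omega
  let t : L := ⟨s⁻¹, inv_mem (IntermediateField.mem_adjoin_simple_self F s)⟩
  have ht : Transcendental F t := by
    intro h
    have h1 : IsAlgebraic F ((t : K)) := h.algebraMap
    exact hs (by simpa [t] using h1.inv)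
  have hkey : ∀ N : ℕ, (d : ℤ) * (N + 1) ≤ 1 + divDeg C + N * divDeg (zeroDiv (F := F) s) := by
    intro N
    have hli := linearIndependent_smul (ht.linearIndependent_pow_fin (N + 1)) w.linearIndependent
    have hmem : ∀ q : Fin (N + 1) × Fin d, t ^ (q.1 : ℕ) • w q.2 ∈ RRspace (C + N • zeroDiv s) := by
      intro q
      rw [mem_RRspace_iff]
      intro p
      have h1 : p.Ge (s⁻¹ ^ (q.1 : ℕ)) ((q.1 : ℕ) * -p.ord s) := by
        refine FFPlace.Ge.of_le (le_of_eq ?_)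
        rw [FFPlace.ord_pow p, FFPlace.ord_inv]
      have h2 : t ^ (q.1 : ℕ) • w q.2 = s⁻¹ ^ (q.1 : ℕ) * w q.2 := by
        rw [Algebra.smul_def]; rfl
      rw [h2]
      refine (h1.mul (hwC q.2 p)).mono ?_
      have hq : ((q.1 : ℕ) : ℤ) ≤ N := by exact_mod_cast Nat.lt_succ_iff.1 q.1.2
      rw [Finsupp.add_apply, Finsupp.smul_apply, hff.zeroDiv_apply hs0, nsmul_eq_mul]
      have h3 : ((q.1 : ℕ) : ℤ) * p.ord s ≤ N * max (p.ord s) 0 :=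
        (mul_le_mul_of_nonneg_left (le_max_left _ _) (by positivity)).trans
          (mul_le_mul_of_nonneg_right hq (le_max_right _ _))
      linarith
    have := finiteDimensional_RRspace hff hcf (C + N • zeroDiv s)
    have hli' : LinearIndependent F (fun q : Fin (N + 1) × Fin d =>
        (⟨t ^ (q.1 : ℕ) • w q.2, hmem q⟩ : RRspace (C + N • zeroDiv s))) :=
      LinearIndependent.of_comp (RRspace (C + N • zeroDiv s)).subtype hli
    have h4 := hli'.fintype_card_le_finrank
    rw [Fintype.card_prod, Fintype.card_fin, Fintype.card_fin] at h4
    have h5 := ellDim_le_of_le hff hcf (A := 0) (B := C + N • zeroDiv s)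
      (add_nonneg hC (nsmul_nonneg (zeroDiv_nonneg s) N))
    rw [ellDim_zero hff hcf, divDeg_zero, divDeg_add, divDeg_nsmul] at h5
    change (N + 1) * d ≤ ellDim (C + N • zeroDiv s) at h4
    have h6 : (((N + 1) * d : ℕ) : ℤ) ≤ ellDim (C + N • zeroDiv s) := by exact_mod_cast h4
    push_cast at h6 h5
    linarith
  by_contra! hlt
  have h7 := hkey (1 + divDeg C).toNat
  have h8 : ((1 + divDeg C).toNat : ℤ) = 1 + divDeg C := by
    apply Int.toNat_of_nonneg
    have := divDeg_nonneg hC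
    omega
  rw [h8] at h7
  have h9 := divDeg_nonneg hC
  have h10 := divDeg_zeroDiv_pos hff hs
  nlinarith

open Polynomial in
theorem irreducible_aeval_adjoin {z : K} (hz : Transcendental F z) {P : F[X]}
    (hP : Irreducible P) (h : aeval z P ∈ Algebra.adjoin F {z}) :
    Irreducible (⟨aeval z P, h⟩ : Algebra.adjoin F {z}) := by
  have h1 : ∀ q : F[X], aeval z q ∈ Algebra.adjoin F {z} := fun q => by
    rw [Algebra.adjoin_singleton_eq_range_aeval]; exact ⟨q, rfl⟩
  let φ : F[X] →+* Algebra.adjoin F {z} :=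
    ((aeval z).codRestrict (Algebra.adjoin F {z}) h1).toRingHom
  have hφ : Function.Bijective φ := by
    constructor
    · intro a b hab
      exact transcendental_iff_injective.1 hz (congrArg Subtype.val hab)
    · rintro ⟨u, hu⟩
      have hu' := hu
      rw [Algebra.adjoin_singleton_eq_range_aeval] at hu'
      obtain ⟨q, hq⟩ := hu'
      exact ⟨q, Subtype.ext hq⟩
  exact (MulEquiv.irreducible_iff (RingEquiv.ofBijective φ hφ)).2 hP

theorem intTrace_mem_of_pow_mem_map {R S : Type} [CommRing R] [CommRing S] [Algebra R S]
    [IsDedekindDomain R] [IsDomain S] [Module.IsTorsionFree R S] [Module.Finite R S]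
    [IsIntegrallyClosed S] {p : Ideal R} [p.IsMaximal] {x : S} {n : ℕ}
    (h : x ^ n ∈ p.map (algebraMap R S)) : Algebra.intTrace R S x ∈ p := by
  have hnil : IsNilpotent (Ideal.Quotient.mk (p.map (algebraMap R S)) x) :=
    ⟨n, by rw [← map_pow]; exact Ideal.Quotient.eq_zero_iff_mem.2 h⟩
  have htr := Algebra.isNilpotent_trace_of_isNilpotent (R := R ⧸ p) hnil
  rw [Algebra.trace_quotient_eq_of_isDedekindDomain] at htr
  exact Ideal.Quotient.eq_zero_iff_mem.1 htr.eq_zero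

open Polynomial in
open scoped IntermediateField.algebraAdjoinAdjoin in
/-- If `k` is integral over `F[z]` and vanishes at all places above an irreducible polynomial `P`,
then the trace of `k` is divisible by `P(z)`. -/
theorem exists_trace_eq_aeval_mul [CharZero F] {z : K} (hz : Transcendental F z)
    [FiniteDimensional (IntermediateField.adjoin F {z}) K]
    {P : F[X]} (hP : Irreducible P) {k : K}
    (h0 : ∀ p : FFPlace F K, p.Ge z 0 → p.Ge k 0)
    (h1 : ∀ p : FFPlace F K, p.Ge z 0 → p.Ge (aeval z P) 1 → p.Ge k 1) :
    ∃ G : F[X], (Algebra.trace (IntermediateField.adjoin F {z}) K k : K) = aeval z (P * G) := by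
  have := isPrincipalIdealRing_adjoin_singleton F z
  have := isDedekindDomain_integralClosure F z
  have := isFractionRing_integralClosure F z
  have := finite_integralClosure F z
  have hsep : Algebra.IsSeparable (IntermediateField.adjoin F {z}) K := isSeparable_adjoin
  have hPz : aeval z P ∈ Algebra.adjoin F {z} := by
    rw [Algebra.adjoin_singleton_eq_range_aeval]; exact ⟨P, rfl⟩
  have hP0 : aeval z P ≠ 0 := by
    intro h
    exact hP.ne_zero (transcendental_iff_injective.1 hz (by simpa using h))
  have hirr := irreducible_aeval_adjoin hz hP hPz
  set π : Algebra.adjoin F {z} := ⟨aeval z P, hPz⟩ with hπ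
  have hmax : (Ideal.span {π}).IsMaximal := PrincipalIdealRing.isMaximal_of_irreducible hirr
  have hfin := FFPlace.finite_setOf_ord_ne_zero_of_ge (F := F) (z := z) hP0
  obtain ⟨N, hN⟩ : ∃ N : ℕ, ∀ p : FFPlace F K, p.Ge z 0 → p.ord (aeval z P) ≤ N := by
    refine ⟨∑ p ∈ hfin.toFinset, (p.ord (aeval z P)).toNat, fun p hp => ?_⟩
    by_cases hp0 : p.ord (aeval z P) = 0
    · rw [hp0]; positivity
    · have h2 := Finset.single_le_sum (f := fun p : FFPlace F K => (p.ord (aeval z P)).toNat)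
        (fun _ _ => Nat.zero_le _) (hfin.mem_toFinset.2 ⟨hp, hp0⟩)
      have h3 := Int.self_le_toNat (p.ord (aeval z P))
      have h4 : ((p.ord (aeval z P)).toNat : ℤ)
        ≤ (∑ p ∈ hfin.toFinset, (p.ord (aeval z P)).toNat : ℕ) := by exact_mod_cast h2
      omega
  let kS : integralClosure (Algebra.adjoin F {z}) K := ⟨k, FFPlace.isIntegral_of_ge h0⟩
  have hquot : IsIntegral (Algebra.adjoin F {z}) (k ^ N * (aeval z P)⁻¹) := by
    refine FFPlace.isIntegral_of_ge fun p hp => ?_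
    have h2 : p.Ge (aeval z P) 0 := FFPlace.Ge.aeval hp P
    have h3 := h2.le_ord hP0
    have hi : p.Ge (aeval z P)⁻¹ (-p.ord (aeval z P)) := FFPlace.Ge.of_le (by rw [FFPlace.ord_inv])
    by_cases h4 : p.ord (aeval z P) = 0
    · rw [h4] at hi
      exact ((h0 p hp).pow N |>.mul hi).mono (by simp)
    · refine (((h1 p hp (FFPlace.Ge.of_le (by omega))).pow N).mul hi).mono ?_
      have := hN p hp
      simp only [mul_one]
      omega
  have hpow : kS ^ N ∈ Ideal.map
      (algebraMap (Algebra.adjoin F {z}) (integralClosure (Algebra.adjoin F {z}) K))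
        (Ideal.span {π}) := by
    rw [Ideal.map_span, Set.image_singleton, Ideal.mem_span_singleton]
    refine ⟨⟨_, hquot⟩, Subtype.ext ?_⟩
    change k ^ N = aeval z P * (k ^ N * (aeval z P)⁻¹)
    field_simp
  have htr0 := intTrace_mem_of_pow_mem_map hpow
  rw [Ideal.mem_span_singleton] at htr0
  obtain ⟨c, hc⟩ := htr0
  obtain ⟨G, hG⟩ : (c : K) ∈ (aeval z : F[X] →ₐ[F] K).range :=
    (Algebra.adjoin_singleton_eq_range_aeval F z).le c.2
  refine ⟨G, ?_⟩
  have h5 := Algebra.algebraMap_intTrace (A := Algebra.adjoin F {z})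
    (B := integralClosure (Algebra.adjoin F {z}) K) (K := IntermediateField.adjoin F {z})
    (L := K) kS
  have h6 := congrArg (Subtype.val) h5
  rw [hc] at h6
  change aeval z P * (c : K) = _ at h6
  rw [map_mul, show aeval z G = (c : K) from hG]
  exact h6.symm

open Polynomial in
/-- A place of `F(z)` below `p` where `z` is finite is given by a monic irreducible polynomial. -/
theorem FFPlace.exists_irreducible_below (hff : IsFunctionField F K) (p : FFPlace F K) {z : K}
    (hz : p.Ge z 0) : ∃ P : F[X], P.Monic ∧ Irreducible P ∧ p.Ge (aeval z P) 1 := by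
  have := FFPlace.finite_residue hff p
  let ζ : p.valRing := ⟨z, hz⟩
  have hprime : (p.maxIdeal).IsPrime := by
    refine ⟨(Ideal.ne_top_iff_one _).2 p.one_notMem_maxIdeal, ?_⟩
    rintro ⟨a, ha⟩ ⟨b, hb⟩ hab
    by_contra! h
    rcases ha with rfl | ha
    · exact h.1 (Or.inl rfl)
    rcases hb with rfl | hb
    · exact h.2 (Or.inl rfl)
    have ha0 : a ≠ 0 := fun h0 => h.1 (Or.inl h0)
    have hb0 : b ≠ 0 := fun h0 => h.2 (Or.inl h0)
    have ha1 : ¬ 1 ≤ p.ord a := fun h1 => h.1 (Or.inr h1)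
    have hb1 : ¬ 1 ≤ p.ord b := fun h1 => h.2 (Or.inr h1)
    rcases hab with h0 | h0
    · exact mul_ne_zero ha0 hb0 h0
    · change 1 ≤ p.ord (a * b) at h0
      rw [p.ord_mul a b ha0 hb0] at h0
      omega
  have hdom : IsDomain (p.valRing ⧸ p.maxIdeal) := Ideal.Quotient.isDomain _
  have hy_int : IsIntegral F (Ideal.Quotient.mk p.maxIdeal ζ) := Algebra.IsIntegral.isIntegral _
  refine ⟨minpoly F (Ideal.Quotient.mk p.maxIdeal ζ), minpoly.monic hy_int,
    minpoly.irreducible hy_int, ?_⟩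
  have h1 : Ideal.Quotient.mk p.maxIdeal (aeval ζ (minpoly F (Ideal.Quotient.mk p.maxIdeal ζ)))
      = 0 := by
    have h2 := minpoly.aeval F (Ideal.Quotient.mk p.maxIdeal ζ)
    rw [← Ideal.Quotient.mkₐ_eq_mk F, aeval_algHom_apply] at h2
    exact h2
  rw [Ideal.Quotient.eq_zero_iff_mem, FFPlace.mem_maxIdeal] at h1
  have h3 : ∀ q : F[X], ((aeval ζ q : p.valRing) : K) = aeval z q := by
    intro q
    rw [aeval_eq_sum_range, aeval_eq_sum_range, AddSubmonoidClass.coe_finsetSum]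
    refine Finset.sum_congr rfl fun i _ => ?_
    rw [Algebra.smul_def, Algebra.smul_def]
    rfl
  rwa [h3] at h1

open Polynomial in
theorem exists_trace_eq_aeval_mul_of_eq [CharZero F] {z : K} (hz : Transcendental F z)
    (L : IntermediateField F K) [FiniteDimensional L K]
    (hL : L = IntermediateField.adjoin F {z})
    {P : F[X]} (hP : Irreducible P) {k : K}
    (h0 : ∀ p : FFPlace F K, p.Ge z 0 → p.Ge k 0)
    (h1 : ∀ p : FFPlace F K, p.Ge z 0 → p.Ge (aeval z P) 1 → p.Ge k 1) :
    ∃ G : F[X], (Algebra.trace L K k : K) = aeval z (P * G) := by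
  subst hL
  exact exists_trace_eq_aeval_mul hz hP h0 h1

theorem coe_trace_mul {L : IntermediateField F K} {l : K} (hl : l ∈ L) (h : K) :
    (Algebra.trace L K (l * h) : K) = l * (Algebra.trace L K h : K) := by
  have h1 := (Algebra.trace L K).map_smul (⟨l, hl⟩ : L) h
  have h2 := congrArg Subtype.val h1
  exact h2

open Polynomial in
theorem aeval_mem_adjoin_inv (s : K) (q : F[X]) :
    aeval s⁻¹ q ∈ IntermediateField.adjoin F {s} := by
  have h := aeval_mem_adjoin_singleton F s⁻¹ (p := q)
  rw [← adjoin_inv_singleton]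
  exact IntermediateField.algebra_adjoin_le_adjoin _ _ h

open Polynomial in
/-- A function whose poles are bounded by the ramification of `F(s)` and which vanishes at the
zeros of `s` has trace zero over `F(s)`. -/
theorem trace_eq_zero_of_ge [CharZero F] (hff : IsFunctionField F K) {s : K}
    (hs : Transcendental F s) (P : FFPlace F K → F[X])
    (hP : ∀ p : FFPlace F K, p.Ge s⁻¹ 0 →
      (P p).Monic ∧ Irreducible (P p) ∧ p.Ge (aeval s⁻¹ (P p)) 1)
    (T : Finset (FFPlace F K)) {h : K}
    (h1 : ∀ p ∈ T, p.Ge s⁻¹ 0 → p.Ge h (1 - p.ord (aeval s⁻¹ (P p))))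
    (h2 : ∀ p ∉ T, p.Ge s⁻¹ 0 → p.Ge h 0)
    (h3 : ∀ p : FFPlace F K, 0 < p.ord s → p.Ge h 1) :
    Algebra.trace (IntermediateField.adjoin F {s}) K h = 0 := by
  classical
  have := hff.finiteDimensional_adjoin hs
  have hs0 : s ≠ 0 := fun h0 => hs (h0 ▸ isAlgebraic_zero)
  have ht : Transcendental F s⁻¹ := fun h => hs (by simpa using h.inv)
  have hne : ∀ q : F[X], q ≠ 0 → aeval s⁻¹ q ≠ 0 := fun q hq h0 =>
    hq (transcendental_iff_injective.1 ht (by simpa using h0))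
  set L : IntermediateField F K := IntermediateField.adjoin F {s} with hL
  let Ps : Finset F[X] := insert X ((T.filter fun p => p.Ge s⁻¹ 0).image P)
  have hPs : ∀ Q ∈ Ps, Q.Monic ∧ Irreducible Q := by
    intro Q hQ
    rcases Finset.mem_insert.1 hQ with rfl | hQ
    · exact ⟨monic_X, irreducible_X⟩
    · obtain ⟨p, hp, rfl⟩ := Finset.mem_image.1 hQ
      have := hP p (Finset.mem_filter.1 hp).2
      exact ⟨this.1, this.2.1⟩
  let R : F[X] := ∏ Q ∈ Ps, Q
  have hR : R ≠ 0 := Finset.prod_ne_zero_iff.2 fun Q hQ => (hPs Q hQ).2.ne_zero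
  have hmulge : ∀ (p : FFPlace F K) (Q : F[X]) (i : ℤ), p.Ge s⁻¹ 0 → Q ∈ Ps →
      p.Ge (aeval s⁻¹ Q) i → p.Ge (aeval s⁻¹ R) i := by
    intro p Q i hp hQ hi
    obtain ⟨R', hR'⟩ : Q ∣ R := Finset.dvd_prod_of_mem _ hQ
    rw [hR', map_mul]
    exact (hi.mul (FFPlace.Ge.aeval hp R')).mono (by omega)
  have hT1 : ∀ p ∈ T, p.Ge s⁻¹ 0 → p.Ge (aeval s⁻¹ R * h) 1 := by
    intro p hpT hp
    have h4 : P p ∈ Ps := Finset.mem_insert_of_mem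
      (Finset.mem_image_of_mem P (Finset.mem_filter.2 ⟨hpT, hp⟩))
    exact ((hmulge p (P p) _ hp h4 (FFPlace.Ge.of_le le_rfl)).mul (h1 p hpT hp)).mono (by omega)
  have hT0 : ∀ p : FFPlace F K, p.Ge s⁻¹ 0 → p.Ge (aeval s⁻¹ R * h) 0 := by
    intro p hp
    by_cases hpT : p ∈ T
    · exact (hT1 p hpT hp).mono (by omega)
    · exact ((FFPlace.Ge.aeval hp R).mul (h2 p hpT hp)).mono (by omega)
  have hdvd : ∀ Q ∈ Ps, ∃ G : F[X],
      (Algebra.trace L K (aeval s⁻¹ R * h) : K) = aeval s⁻¹ (Q * G) := by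
    intro Q hQ
    refine exists_trace_eq_aeval_mul_of_eq ht L (adjoin_inv_singleton s).symm (hPs Q hQ).2 hT0 ?_
    intro p hp hpQ
    by_cases hpT : p ∈ T
    · exact hT1 p hpT hp
    · exact ((hmulge p Q 1 hp hQ hpQ).mul (h2 p hpT hp)).mono (by omega)
  obtain ⟨G₀, hG₀⟩ := hdvd X (Finset.mem_insert_self _ _)
  have hRdvd : R ∣ X * G₀ := by
    refine Finset.prod_dvd_of_coprime ?_ ?_
    · intro Q hQ Q' hQ' hne'
      refine (hPs Q hQ).2.coprime_iff_not_dvd.2 fun hd => hne' ?_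
      exact eq_of_monic_of_associated (hPs Q hQ).1 (hPs Q' hQ').1
        ((hPs Q hQ).2.associated_of_dvd (hPs Q' hQ').2 hd)
    · intro Q hQ
      obtain ⟨G, hG⟩ := hdvd Q hQ
      exact ⟨G, transcendental_iff_injective.1 ht (by rw [← hG₀, hG])⟩
  obtain ⟨G, hG⟩ := hRdvd
  have hRmem : aeval s⁻¹ R ∈ L := aeval_mem_adjoin_inv s R
  have htr : (Algebra.trace L K h : K) = aeval s⁻¹ G := by
    rw [coe_trace_mul hRmem, hG, map_mul] at hG₀
    exact mul_left_cancel₀ (hne R hR) hG₀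
  have hsL : s ∈ L := IntermediateField.mem_adjoin_simple_self F s
  set n := R.natDegree
  obtain ⟨G', hG'⟩ := exists_trace_eq_aeval_mul_of_eq hs L hL irreducible_X
    (k := (s ^ n * aeval s⁻¹ R) * h) (by
      intro p hp
      rcases (hp.le_ord hs0).eq_or_lt with h0 | h0
      · have h5 : p.Ge s⁻¹ 0 := FFPlace.Ge.of_le (by rw [FFPlace.ord_inv]; omega)
        rw [mul_assoc]
        exact ((hp.pow n).mul (hT0 p h5)).mono (by simp)
      · have h6 := (FFPlace.ord_aeval_of_neg (p := p) (x := s⁻¹)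
          (by rw [FFPlace.ord_inv]; omega) hR).2
        refine (FFPlace.Ge.mul (i := 0) (FFPlace.Ge.of_le ?_) (h3 p h0)).mono (by omega)
        rw [p.ord_mul _ _ (pow_ne_zero _ hs0) (hne R hR), h6, FFPlace.ord_pow, FFPlace.ord_inv]
        apply le_of_eq; ring) (by
      intro p hp hp1
      rw [aeval_X] at hp1
      have h0 := hp1.le_ord hs0
      have h6 := (FFPlace.ord_aeval_of_neg (p := p) (x := s⁻¹)
          (by rw [FFPlace.ord_inv]; omega) hR).2
      refine (FFPlace.Ge.mul (i := 0) (FFPlace.Ge.of_le ?_) (h3 p (by omega))).mono (by omega)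
      rw [p.ord_mul _ _ (pow_ne_zero _ hs0) (hne R hR), h6, FFPlace.ord_pow, FFPlace.ord_inv]
      apply le_of_eq; ring)
  rw [coe_trace_mul (mul_mem (pow_mem hsL n) hRmem), htr, map_mul, aeval_X] at hG'
  have hG0 : G = 0 := by
    by_contra hG0
    obtain ⟨p, hp⟩ := hff.exists_pole ht
    have hp' := hp
    rw [FFPlace.ord_inv] at hp'
    have h6 : p.Ge (s * aeval s G') 1 := ((FFPlace.Ge.of_le (i := 1) (by omega)).mul
      (FFPlace.Ge.aeval (FFPlace.Ge.of_le (by omega)) G')).mono (by omega)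
    rw [← hG'] at h6
    have h7 := h6.le_ord (mul_ne_zero (mul_ne_zero (pow_ne_zero _ hs0) (hne R hR)) (hne G hG0))
    rw [p.ord_mul _ _ (mul_ne_zero (pow_ne_zero _ hs0) (hne R hR)) (hne G hG0),
      p.ord_mul _ _ (pow_ne_zero _ hs0) (hne R hR), (FFPlace.ord_aeval_of_neg hp hR).2,
      (FFPlace.ord_aeval_of_neg hp hG0).2, FFPlace.ord_pow, FFPlace.ord_inv] at h7
    have h8 : (0 : ℤ) ≤ G.natDegree * p.ord s := mul_nonneg (by positivity) (by omega)
    change 1 ≤ (n : ℤ) * p.ord s + n * -p.ord s + G.natDegree * -p.ord s at h7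
    linarith
  rw [hG0, map_zero] at htr
  exact Subtype.ext htr

theorem finrank_RRspan_add_finrank_RRspan_le [CharZero F] (hff : IsFunctionField F K) {s : K}
    (hs : Transcendental F s) {A B : FFPlace F K →₀ ℤ}
    (h : ∀ f ∈ RRspace (A + B), Algebra.trace (IntermediateField.adjoin F {s}) K f = 0) :
    Module.finrank (IntermediateField.adjoin F {s}) (RRspan s A) +
      Module.finrank (IntermediateField.adjoin F {s}) (RRspan s B) ≤
    Module.finrank (IntermediateField.adjoin F {s}) K := by
  have := hff.finiteDimensional_adjoin hs
  have hsep : Algebra.IsSeparable (IntermediateField.adjoin F {s}) K := isSeparable_adjoin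
  let β := Algebra.traceForm (IntermediateField.adjoin F {s}) K
  have h1 : RRspan s A ≤ LinearMap.BilinForm.orthogonal β (RRspan s B) := by
    refine Submodule.span_le.2 fun f hf => ?_
    rw [SetLike.mem_coe, LinearMap.BilinForm.mem_orthogonal_iff]
    intro u hu
    have h2 : RRspan s B ≤ LinearMap.ker (β f) := by
      refine Submodule.span_le.2 fun u hu => ?_
      change Algebra.traceForm (IntermediateField.adjoin F {s}) K f u = 0
      rw [Algebra.traceForm_apply]
      refine h _ ?_
      rw [SetLike.mem_coe, mem_RRspace_iff] at *
      intro p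
      exact ((hf p).mul (hu p)).mono (by rw [Finsupp.add_apply]; omega)
    have h3 : β f u = 0 := h2 hu
    change β u f = 0
    rw [← h3]
    exact (Algebra.traceForm_isSymm (IntermediateField.adjoin F {s}) (S := K)).eq f u |>.symm
  have h4 := Submodule.finrank_mono h1
  have hβ : β.Nondegenerate := traceForm_nondegenerate _ K
  rw [LinearMap.BilinForm.finrank_orthogonal hβ] at h4
  have h5 := finrank_RRspan_le hff hs B
  omega

open Polynomial in
/-- The Hurwitz bound for the ramification divisor of `K` over `F(s)`. -/
theorem divDeg_ramification_le [CharZero F] (hff : IsFunctionField F K)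
    (hcf : IsConstantField F K) {g : ℤ}
    (hR : ∀ A : FFPlace F K →₀ ℤ, divDeg A - ellDim A + 1 ≤ g) {s : K}
    (hs : Transcendental F s) (P : FFPlace F K → F[X])
    (hP : ∀ p : FFPlace F K, p.Ge s⁻¹ 0 →
      (P p).Monic ∧ Irreducible (P p) ∧ p.Ge (aeval s⁻¹ (P p)) 1)
    {E : FFPlace F K →₀ ℤ}
    (h1 : ∀ p : FFPlace F K, p.Ge s⁻¹ 0 → E p ≤ p.ord (aeval s⁻¹ (P p)) - 1)
    (h2 : ∀ p : FFPlace F K, 0 < p.ord s → E p ≤ p.ord s - 1) :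
    divDeg E ≤ 2 * divDeg (zeroDiv (F := F) s) + 2 * g - 2 := by
  have hs0 : s ≠ 0 := fun h0 => hs (h0 ▸ isAlgebraic_zero)
  set A : FFPlace F K →₀ ℤ := zeroDiv s with hA
  have hAp : ∀ p, A p = max (p.ord s) 0 := hff.zeroDiv_apply hs0
  set d := Module.finrank (IntermediateField.adjoin F {s}) K with hd
  have hdh : (d : ℤ) ≤ divDeg A := finrank_adjoin_le_divDeg_zeroDiv hff hcf hs
  have hh : 0 < divDeg A := divDeg_zeroDiv_pos hff hs
  have htr : ∀ f ∈ RRspace (E - A), Algebra.trace (IntermediateField.adjoin F {s}) K f = 0 := by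
    intro f hf
    rw [mem_RRspace_iff] at hf
    have hfin : ∀ p : FFPlace F K, p.Ge s⁻¹ 0 → A p = 0 := by
      intro p hp
      have := hp.le_ord (inv_ne_zero hs0)
      rw [FFPlace.ord_inv] at this
      rw [hAp]
      omega
    refine trace_eq_zero_of_ge hff hs P hP E.support ?_ ?_ ?_
    · intro p _ hp
      have := h1 p hp
      refine (hf p).mono ?_
      rw [Finsupp.sub_apply, hfin p hp]
      omega
    · intro p hpE hp
      refine (hf p).mono ?_
      rw [Finsupp.sub_apply, hfin p hp, Finsupp.notMem_support_iff.1 hpE]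
      omega
    · intro p hp
      have := h2 p hp
      refine (hf p).mono ?_
      rw [Finsupp.sub_apply, hAp]
      omega
  have hind : ∀ N : ℕ, ellDim (E - A) + ellDim (N • A - A) ≤
      ellDim (E - A - N • A) + ellDim (-A) + N * d := by
    intro N
    induction N with
    | zero => simp
    | succ N ih =>
      have h3 := ellDim_le_add_finrank_RRspan hff hcf hs (E - A - N • A)
      have h4 := ellDim_le_add_finrank_RRspan hff hcf hs (N • A)
      have h5 := finrank_RRspan_add_finrank_RRspan_le hff hs (A := E - A - N • A) (B := N • A)
        (by rwa [sub_add_cancel])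
      have h6 : E - A - (N + 1) • A = E - A - N • A - A := by rw [add_smul, one_smul]; abel
      have h7 : (N + 1) • A - A = N • A := by rw [add_smul, one_smul]; abel
      rw [← hA] at h3 h4
      rw [h6, h7, add_mul, one_mul]
      omega
  have hneg : ellDim (-A) = 0 := ellDim_eq_zero_of_neg hff hcf hR (by rw [divDeg_neg]; omega)
  obtain ⟨N, hN⟩ : ∃ N : ℕ, divDeg E < N := ⟨(divDeg E + 1).toNat, by
    have := Int.self_le_toNat (divDeg E + 1); omega⟩
  have hlarge : ellDim (E - A - N • A) = 0 := by
    refine ellDim_eq_zero_of_neg hff hcf hR ?_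
    rw [divDeg_sub, divDeg_sub, divDeg_nsmul]
    nlinarith
  have h8 := hind N
  rw [hneg, hlarge] at h8
  have h9 := hR (N • A - A)
  have h10 := hR (E - A)
  rw [divDeg_sub, divDeg_nsmul] at h9
  rw [divDeg_sub] at h10
  have h11 : (ellDim (E - A) : ℤ) + ellDim (N • A - A) ≤ N * d := by exact_mod_cast (by omega)
  have h12 : (N : ℤ) * d ≤ N * divDeg A := mul_le_mul_of_nonneg_left hdh (by positivity)
  linarith

open Polynomial in
open scoped IntermediateField.algebraAdjoinAdjoin TensorProduct in
/-- The derivation `d/dz` extends from `F(z)` to `K`. -/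
theorem exists_derivation [CharZero F] {z : K} (hz : Transcendental F z)
    [FiniteDimensional (IntermediateField.adjoin F {z}) K] :
    ∃ D : Derivation F K K, D z = 1 := by
  have hsep : Algebra.IsSeparable (IntermediateField.adjoin F {z}) K := isSeparable_adjoin
  have het1 : Algebra.FormallyEtale (Algebra.adjoin F {z}) (IntermediateField.adjoin F {z}) :=
    Algebra.FormallyEtale.of_isLocalization (nonZeroDivisors (Algebra.adjoin F {z}))
  have het2 : Algebra.FormallyEtale (IntermediateField.adjoin F {z}) K :=
    Algebra.FormallyEtale.of_isSeparable _ _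
  have het : Algebra.FormallyEtale (Algebra.adjoin F {z}) K :=
    Algebra.FormallyEtale.comp _ (IntermediateField.adjoin F {z}) _
  have h1 : ∀ q : F[X], aeval z q ∈ Algebra.adjoin F {z} := fun q => by
    rw [Algebra.adjoin_singleton_eq_range_aeval]; exact ⟨q, rfl⟩
  let φ : F[X] →ₐ[F] Algebra.adjoin F {z} := (aeval z).codRestrict (Algebra.adjoin F {z}) h1
  have hφ : Function.Bijective φ := by
    constructor
    · intro a b hab
      exact transcendental_iff_injective.1 hz (congrArg Subtype.val hab)
    · rintro ⟨u, hu⟩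
      have hu' := hu
      rw [Algebra.adjoin_singleton_eq_range_aeval] at hu'
      obtain ⟨q, hq⟩ := hu'
      exact ⟨q, Subtype.ext hq⟩
  let e : F[X] ≃ₐ[F] Algebra.adjoin F {z} := AlgEquiv.ofBijective φ hφ
  have he : ∀ u : Algebra.adjoin F {z}, aeval z (e.symm u) = (u : K) := fun u =>
    congrArg Subtype.val (e.apply_symm_apply u)
  let d : Derivation F (Algebra.adjoin F {z}) K :=
    Derivation.mk' ((aeval z).toLinearMap ∘ₗ derivative ∘ₗ e.symm.toLinearMap) (by
      intro u v
      change aeval z (derivative (e.symm (u * v))) = (u : K) * aeval z (derivative (e.symm v)) +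
        (v : K) * aeval z (derivative (e.symm u))
      rw [map_mul, derivative_mul, map_add, map_mul, map_mul, he, he]
      ring)
  let ψ : K ⊗[Algebra.adjoin F {z}] Ω[Algebra.adjoin F {z}⁄F] →ₗ[K] K :=
    LinearMap.liftBaseChange K d.liftKaehlerDifferential
  let θ := KaehlerDifferential.tensorKaehlerEquivOfFormallyEtale F (Algebra.adjoin F {z}) K
  refine ⟨(ψ ∘ₗ θ.symm.toLinearMap).compDer (KaehlerDifferential.D F K), ?_⟩
  let zA : Algebra.adjoin F {z} := ⟨z, Algebra.self_mem_adjoin_singleton F z⟩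
  have h2 : θ.symm (KaehlerDifferential.D F K z) = 1 ⊗ₜ KaehlerDifferential.D F _ zA :=
    KaehlerDifferential.tensorKaehlerEquivOfFormallyEtale_symm_D_algebraMap F
      (Algebra.adjoin F {z}) K zA
  change ψ (θ.symm (KaehlerDifferential.D F K z)) = 1
  rw [h2, LinearMap.liftBaseChange_tmul, Derivation.liftKaehlerDifferential_comp_D, one_smul]
  change aeval z (derivative (e.symm zA)) = 1
  have h3 : e.symm zA = X := by
    rw [AlgEquiv.symm_apply_eq]
    exact Subtype.ext (aeval_X z).symm
  rw [h3, derivative_X, map_one]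

/-- A nonzero derivation of `K` over `F` does not vanish at transcendental elements. -/
theorem Derivation.eq_zero_of_transcendental [CharZero F] {y : K}
    [FiniteDimensional (IntermediateField.adjoin F {y}) K]
    (D : Derivation F K K) (hD : D y = 0) (x : K) : D x = 0 := by
  have hsep : Algebra.IsSeparable (IntermediateField.adjoin F {y}) K := isSeparable_adjoin
  let Z : IntermediateField F K :=
    { carrier := {x | D x = 0}
      mul_mem' := fun {a b} ha hb => by
        rw [Set.mem_ofPred_eq] at *
        rw [D.leibniz, ha, hb, smul_zero, smul_zero, add_zero]
      add_mem' := fun {a b} ha hb => by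
        rw [Set.mem_ofPred_eq] at *
        rw [map_add, ha, hb, add_zero]
      algebraMap_mem' := fun c => D.map_algebraMap c
      inv_mem' := fun a ha => by
        change D a⁻¹ = 0
        change D a = 0 at ha
        rw [D.leibniz_inv, ha, smul_zero] }
  have hle : IntermediateField.adjoin F {y} ≤ Z :=
    IntermediateField.adjoin_simple_le_iff.2 hD
  let D' : Derivation (IntermediateField.adjoin F {y}) K K :=
    Derivation.mk'
      { toFun := D
        map_add' := map_add D
        map_smul' := fun l x => by
          have h1 : D (l : K) = 0 := hle l.2
          change D ((l : K) * x) = (l : K) * D x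
          rw [D.leibniz, h1, smul_zero, add_zero, smul_eq_mul] } D.leibniz
  have hur : Algebra.FormallyUnramified (IntermediateField.adjoin F {y}) K :=
    Algebra.FormallyUnramified.of_isSeparable _ _
  have h2 := D'.liftKaehlerDifferential_comp_D x
  rw [Subsingleton.elim (KaehlerDifferential.D (IntermediateField.adjoin F {y}) K x) 0,
    map_zero] at h2
  exact h2.symm

namespace FFPlace

variable {p : FFPlace F K} {x y z : K} {i j : ℤ}

theorem exists_forall_ge (p : FFPlace F K) {ι : Type*} [Fintype ι] (f : ι → K) :
    ∃ C ≤ 0, ∀ i, p.Ge (f i) C := by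
  refine ⟨-∑ i, |p.ord (f i)|, neg_nonpos.2 (Finset.sum_nonneg fun i _ => abs_nonneg _),
    fun i => Ge.of_le ?_⟩
  have h := Finset.single_le_sum (f := fun i => |p.ord (f i)|) (fun i _ => abs_nonneg _)
    (Finset.mem_univ i)
  have h' := neg_abs_le (p.ord (f i))
  omega

open Polynomial in
/-- A derivation of `K` over `F` has bounded pole order on the valuation ring of a place. -/
theorem exists_derivation_bound [CharZero F]
    [FiniteDimensional (IntermediateField.adjoin F {z}) K] (hz : p.Ge z 0)
    (D : Derivation F K K) : ∃ C, ∀ y, p.Ge y 0 → p.Ge (D y) C := by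
  have := finite_integralClosure F z
  obtain ⟨n, w, hw⟩ := Module.Finite.exists_fin (R := Algebra.adjoin F {z})
    (M := integralClosure (Algebra.adjoin F {z}) K)
  obtain ⟨C, hC0, hC⟩ := exists_forall_ge p
    (fun o : Option (Fin n) => o.elim (D z) fun i => D (w i : K))
  have hA : ∀ a : Algebra.adjoin F {z}, p.Ge (D (a : K)) C := by
    intro a
    obtain ⟨q, hq⟩ : (a : K) ∈ (aeval z : F[X] →ₐ[F] K).range :=
      (Algebra.adjoin_singleton_eq_range_aeval F z).le a.2
    rw [← show aeval z q = (a : K) from hq, Derivation.map_aeval, smul_eq_mul]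
    exact ((Ge.aeval hz _).mul (hC none)).mono (by omega)
  have hy_int : ∀ u : integralClosure (Algebra.adjoin F {z}) K, p.Ge (D (u : K)) C := by
    intro u
    have hu : u ∈ Submodule.span (Algebra.adjoin F {z}) (Set.range w) := hw ▸ Submodule.mem_top
    induction hu using Submodule.span_induction with
    | mem u hu =>
      obtain ⟨i, rfl⟩ := hu
      exact hC (some i)
    | zero => rw [ZeroMemClass.coe_zero, map_zero]; exact Ge.zero p C
    | add u v _ _ hu hv =>
      have h1 : ((u + v : integralClosure (Algebra.adjoin F {z}) K) : K) = u + v := rfl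
      rw [h1, map_add]
      exact hu.add hv
    | smul a u _ hu =>
      have h1 : ((a • u : integralClosure (Algebra.adjoin F {z}) K) : K) = (a : K) * u := rfl
      rw [h1, D.leibniz, smul_eq_mul, smul_eq_mul]
      have h2 : p.Ge (a : K) 0 := Ge.of_mem_adjoin hz a.2
      have h3 : p.Ge (u : K) 0 := Ge.of_isIntegral hz u.2
      exact ((h2.mul hu).mono (by omega)).add ((h3.mul (hA a)).mono (by omega))
  refine ⟨C, fun y hy => ?_⟩
  obtain ⟨s, u, hs, hu, hu0, hou, hyu⟩ := exists_integral_fraction hz hy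
  have h1 : D y = u⁻¹ * (D s - y * D u) := by
    rw [← hyu, D.leibniz, smul_eq_mul, smul_eq_mul]
    field_simp
    ring
  have h2 : p.Ge u⁻¹ 0 := Ge.of_le (by rw [ord_inv, hou]; simp)
  rw [h1]
  exact (h2.mul ((hy_int ⟨s, hs⟩).sub ((hy.mul (hy_int ⟨u, hu⟩)).mono (by omega)))).mono (by omega)

open Polynomial in
theorem ord_aeval_derivative {P : F[X]} [CharZero F] (hP : Irreducible P) (hx : p.Ge x 0)
    (h : p.Ge (aeval x P) 1) :
    aeval x (derivative P) ≠ 0 ∧ p.ord (aeval x (derivative P)) = 0 := by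
  obtain ⟨a, b, hab⟩ := hP.separable
  have h1 := congrArg (aeval x) hab
  rw [map_add, map_mul, map_mul, map_one] at h1
  have h2 : p.Ge (aeval x (derivative P)) 0 := Ge.aeval hx _
  have h3 : ¬ p.Ge (aeval x (derivative P)) 1 := by
    intro h3
    have h4 : p.Ge (1 : K) 1 := by
      rw [← h1]
      exact (((Ge.aeval hx a).mul h).mono (by omega)).add
        (((Ge.aeval hx b).mul h3).mono (by omega))
    have := h4.le_ord one_ne_zero
    rw [p.ord_one] at this
    omega
  have h0 : aeval x (derivative P) ≠ 0 := fun h0 => h3 (h0 ▸ Ge.zero p 1)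
  refine ⟨h0, ?_⟩
  have h4 := h2.le_ord h0
  have h5 : ¬ 1 ≤ p.ord (aeval x (derivative P)) := fun h => h3 (Ge.of_le h)
  omega

theorem ord_natCast [CharZero F] (p : FFPlace F K) {n : ℕ} (hn : n ≠ 0) : p.ord (n : K) = 0 := by
  have := p.ord_algebraMap (n : F) (Nat.cast_ne_zero.2 hn)
  rwa [map_natCast] at this

theorem ne_zero_of_ord_ne_zero (h : p.ord x ≠ 0) : x ≠ 0 := fun h0 => h (h0 ▸ p.ord_zero)

/-- One improvement step for the pole order of a derivation. -/
theorem derivation_ge_succ [CharZero F] (hff : IsFunctionField F K) (D : Derivation F K K)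
    {q : K} (hq : 0 < p.ord q) (hDq : p.Ge (D q) (p.ord q)) {m : ℤ} (hm : m ≤ 0)
    (h : ∀ y, p.Ge y 0 → p.Ge (D y) m) {y : K} (hy : p.Ge y 0) : p.Ge (D y) (m + 1) := by
  obtain ⟨ϖ, hϖ0, hϖ⟩ := p.exists_uniformizer
  have hq0 : q ≠ 0 := ne_zero_of_ord_ne_zero hq.ne'
  obtain ⟨e, he⟩ : ∃ e : ℕ, p.ord q = e := ⟨(p.ord q).toNat, by omega⟩
  have he0 : e ≠ 0 := by rintro rfl; rw [he] at hq; exact absurd hq (by simp)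
  set u := q * (ϖ ^ e)⁻¹ with hu
  have hu0 : u ≠ 0 := mul_ne_zero hq0 (inv_ne_zero (pow_ne_zero _ hϖ0))
  have hou : p.ord u = 0 := by
    rw [hu, p.ord_mul _ _ hq0 (inv_ne_zero (pow_ne_zero _ hϖ0)), ord_inv, ord_pow, hϖ, he]
    simp
  have hqu : q = ϖ ^ e * u := by rw [hu]; field_simp
  have hDϖ : p.Ge (D ϖ) (m + 1) := by
    have h1 : D ϖ = (e : K)⁻¹ * (ϖ * (D q * q⁻¹ - D u * u⁻¹)) := by
      have hek : (e : K) ≠ 0 := by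
        have : ((algebraMap F K) (e : F)) ≠ 0 :=
          (map_ne_zero _).2 (Nat.cast_ne_zero.2 he0)
        rwa [map_natCast] at this
      have h2 : D q = ϖ ^ e * D u + u * (e * (ϖ ^ (e - 1) * D ϖ)) := by
        rw [hqu, D.leibniz, D.leibniz_pow]
        simp only [smul_eq_mul, nsmul_eq_mul]
      have h3 : ϖ ^ e = ϖ ^ (e - 1) * ϖ := (pow_sub_one_mul he0 ϖ).symm
      rw [h2, hqu, h3]
      have h4 : ϖ ^ (e - 1) ≠ 0 := pow_ne_zero _ hϖ0
      field_simp
      ring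
    have h5 : p.Ge (e : K)⁻¹ 0 := Ge.of_le (by rw [ord_inv, ord_natCast p he0]; simp)
    have h6 : p.Ge q⁻¹ (-p.ord q) := Ge.of_le (by rw [ord_inv])
    have h7 : p.Ge u⁻¹ 0 := Ge.of_le (by rw [ord_inv, hou]; simp)
    have h8 := h u (Ge.of_le (by omega))
    rw [h1]
    refine (h5.mul ((Ge.of_le (i := 1) (by omega)).mul
      (((hDq.mul h6).mono (j := m) (by omega)).sub
        ((h8.mul h7).mono (j := m) (by omega))))).mono (by omega)
  have hmax : ∀ v, p.Ge v 1 → p.Ge (D v) (m + 1) := by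
    intro v hv
    have h1 : v = ϖ * (v * ϖ⁻¹) := by field_simp
    have h2 : p.Ge (v * ϖ⁻¹) 0 := (hv.mul (Ge.of_le (i := -1) (by rw [ord_inv, hϖ]))).mono (by omega)
    rw [h1, D.leibniz, smul_eq_mul, smul_eq_mul]
    exact (((Ge.of_le (i := 1) (by omega)).mul (h _ h2)).mono (by omega)).add
      ((h2.mul hDϖ).mono (by omega))
  obtain ⟨f, -, hf, hfy⟩ := p.exists_irreducible_below hff hy
  obtain ⟨hf0, hf1⟩ := ord_aeval_derivative hf hy hfy
  have h9 := hmax _ hfy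
  rw [Derivation.map_aeval, smul_eq_mul] at h9
  have h10 : D y = (Polynomial.aeval y (Polynomial.derivative f))⁻¹ *
      (Polynomial.aeval y (Polynomial.derivative f) * D y) := by field_simp
  rw [h10]
  exact ((Ge.of_le (i := 0) (by rw [ord_inv, hf1]; simp)).mul h9).mono (by omega)

/-- A derivation which does not decrease the order of one element of `p` preserves all powers
of the maximal ideal of `p`. -/
theorem derivation_ge [CharZero F] (hff : IsFunctionField F K) (D : Derivation F K K)
    {q : K} (hq : 0 < p.ord q) (hDq : p.Ge (D q) (p.ord q))
    (hy : p.Ge y 0) : p.Ge (D y) 1 := by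
  obtain ⟨z, hz0, hz1⟩ := p.exists_uniformizer
  have hz : Transcendental F z := transcendental_of_ord_ne_zero (p := p) (by omega)
  have := hff.finiteDimensional_adjoin hz
  obtain ⟨C, hC⟩ := exists_derivation_bound (p := p) (z := z) (Ge.of_le (by omega)) D
  have h : ∀ n : ℕ, ∀ y, p.Ge y 0 → p.Ge (D y) (min 1 (C + n)) := by
    intro n
    induction n with
    | zero => exact fun y hy => (hC y hy).mono (by simp)
    | succ n ih =>
      intro y hy
      by_cases hle : 1 ≤ C + n
      · exact (ih y hy).mono (by omega)
      · exact (derivation_ge_succ hff D hq hDq (by omega) ih hy).mono (by push_cast; omega)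
  exact (h (1 - C).toNat y hy).mono (by omega)

theorem derivation_ge_of_ge [CharZero F] (hff : IsFunctionField F K) (D : Derivation F K K)
    {q : K} (hq : 0 < p.ord q) (hDq : p.Ge (D q) (p.ord q))
    (hy : p.Ge y i) : p.Ge (D y) i := by
  obtain ⟨n, hn⟩ := Int.eq_nat_or_neg i
  obtain ⟨ϖ, hϖ0, hϖ⟩ := p.exists_uniformizer
  have hpow : ∀ n : ℕ, p.Ge (D (ϖ ^ n)) n := by
    intro n
    rcases n with _ | n
    · simpa using Ge.zero p 0
    · rw [D.leibniz_pow, smul_eq_mul, nsmul_eq_mul, Nat.add_sub_cancel]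
      exact ((Ge.natCast p _).mul (((Ge.of_le (i := 1) (by omega)).pow n).mul
        (derivation_ge hff D hq hDq (Ge.of_le (i := 0) (by omega))))).mono (by push_cast; omega)
  have hgen : ∀ n : ℕ, (p.Ge y n → p.Ge (D y) n) ∧ (p.Ge y (-n) → p.Ge (D y) (-n)) := by
    intro n
    have hon : p.ord (ϖ ^ n) = n := by rw [ord_pow, hϖ, mul_one]
    have hi : p.Ge (ϖ ^ n)⁻¹ (-n) := Ge.of_le (by rw [ord_inv, hon])
    constructor
    · intro hy
      have h1 : y = ϖ ^ n * (y * (ϖ ^ n)⁻¹) := by field_simp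
      have h2 : p.Ge (y * (ϖ ^ n)⁻¹) 0 := (hy.mul hi).mono (by omega)
      rw [h1, D.leibniz, smul_eq_mul, smul_eq_mul]
      exact (((Ge.of_le hon.ge).mul (derivation_ge hff D hq hDq h2)).mono (by omega)).add
        ((h2.mul (hpow n)).mono (by omega))
    · intro hy
      have h2 : p.Ge (y * ϖ ^ n) 0 := (hy.mul (Ge.of_le hon.ge)).mono (by omega)
      have h3 := derivation_ge hff D hq hDq h2
      have h4 : D y = (ϖ ^ n)⁻¹ * (D (y * ϖ ^ n) - y * D (ϖ ^ n)) := by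
        rw [D.leibniz, smul_eq_mul, smul_eq_mul]
        field_simp
        ring
      rw [h4]
      exact (hi.mul ((h3.mono (by omega)).sub ((hy.mul (hpow n)).mono (j := 0) (by omega)))).mono
        (by omega)
  rcases hn with rfl | rfl
  · exact (hgen n).1 hy
  · exact (hgen n).2 hy

end FFPlace

theorem mem_range_of_derivation_eq_zero [CharZero F] (hff : IsFunctionField F K)
    (hcf : IsConstantField F K) {D : Derivation F K K} (hD : D ≠ 0) {y : K} (hy : D y = 0) :
    y ∈ (algebraMap F K).range := by
  by_contra h
  have hyt : Transcendental F y := fun h' => h (hcf y h')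
  have := hff.finiteDimensional_adjoin hyt
  exact hD (Derivation.ext fun x => D.eq_zero_of_transcendental hy x)

namespace FFPlace

variable {p : FFPlace F K} {f q y : K} {i : ℤ}

theorem derivation_ge_sub [CharZero F] (hff : IsFunctionField F K) (D : Derivation F K K)
    (hf : f ≠ 0) (hq : 0 < p.ord q) (hDq : p.Ge (f * D q) (p.ord q)) (hy : p.Ge y i) :
    p.Ge (D y) (i - p.ord f) := by
  have h := derivation_ge_of_ge hff (f • D) hq hDq hy
  have h1 : D y = f⁻¹ * (f • D) y := by
    rw [Derivation.smul_apply, smul_eq_mul, inv_mul_cancel_left₀ hf]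
  rw [h1]
  exact ((Ge.of_le (ord_inv p f).ge).mul h).mono (by omega)

theorem derivation_ge_one_sub [CharZero F] (hff : IsFunctionField F K) (D : Derivation F K K)
    (hf : f ≠ 0) (hq : 0 < p.ord q) (hDq : p.Ge (f * D q) (p.ord q)) (hy : p.Ge y 0) :
    p.Ge (D y) (1 - p.ord f) := by
  have h := derivation_ge hff (f • D) hq hDq hy
  have h1 : D y = f⁻¹ * (f • D) y := by
    rw [Derivation.smul_apply, smul_eq_mul, inv_mul_cancel_left₀ hf]
  rw [h1]
  exact ((Ge.of_le (ord_inv p f).ge).mul h).mono (by omega)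

end FFPlace

open Polynomial in
/-- The divisor `n` of a nonzero derivation `D`, with degree at most `2 * g - 2`: at each place `p`
the function `n` controls how `D` changes orders. -/
theorem exists_derivation_divisor [CharZero F] (hff : IsFunctionField F K)
    (hcf : IsConstantField F K) {g : ℤ}
    (hR : ∀ A : FFPlace F K →₀ ℤ, divDeg A - ellDim A + 1 ≤ g) :
    ∃ D : Derivation F K K, D ≠ 0 ∧ ∃ (n : FFPlace F K → ℤ) (T₀ : Finset (FFPlace F K)),
      (∀ (p : FFPlace F K) y i, p.Ge y i → p.Ge (D y) (i - 1 - n p)) ∧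
      (∀ (p : FFPlace F K) y, p.Ge y 0 → p.Ge (D y) (-n p)) ∧
      ∀ T, T₀ ⊆ T → ∑ p ∈ T, n p * p.deg ≤ 2 * g - 2 := by
  classical
  obtain ⟨t, ht, hfin⟩ := hff
  have hff : IsFunctionField F K := ⟨t, ht, hfin⟩
  obtain ⟨D, hD⟩ := exists_derivation ht
  have ht0 : t ≠ 0 := fun h0 => ht (h0 ▸ isAlgebraic_zero)
  have hs : Transcendental F t⁻¹ := fun h => ht (by simpa using h.inv)
  have hex : ∀ p : FFPlace F K, ∃ P : F[X], p.Ge t 0 →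
      P.Monic ∧ Irreducible P ∧ p.Ge (aeval t P) 1 := by
    intro p
    by_cases hp : p.Ge t 0
    · obtain ⟨P, hP⟩ := p.exists_irreducible_below hff hp
      exact ⟨P, fun _ => hP⟩
    · exact ⟨0, fun h => absurd h hp⟩
  choose P hP using hex
  have hP0 : ∀ p : FFPlace F K, p.Ge t 0 → aeval t (P p) ≠ 0 := fun p hp h0 =>
    (hP p hp).1.ne_zero ((transcendental_iff.1 ht) _ h0)
  have hge : ∀ p : FFPlace F K, p.Ge t 0 ↔ 0 ≤ p.ord t := fun p =>
    ⟨fun h => h.le_ord ht0, fun h => FFPlace.Ge.of_le h⟩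
  let f : FFPlace F K → K := fun p => if 0 ≤ p.ord t then aeval t (P p) else t
  have hf0 : ∀ p, f p ≠ 0 := by
    intro p
    by_cases hp : 0 ≤ p.ord t
    · simpa only [f, if_pos hp] using hP0 p ((hge p).2 hp)
    · simpa only [f, if_neg hp] using ht0
  have hq : ∀ p : FFPlace F K, ∃ q, 0 < p.ord q ∧ p.Ge (f p * D q) (p.ord q) := by
    intro p
    by_cases hp : 0 ≤ p.ord t
    · have hp' := (hge p).2 hp
      refine ⟨aeval t (P p), (hP p hp').2.2.le_ord (hP0 p hp'), ?_⟩
      simp only [f, if_pos hp]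
      rw [Derivation.map_aeval, hD, smul_eq_mul, mul_one]
      exact ((FFPlace.Ge.of_le le_rfl).mul (FFPlace.Ge.aeval hp' _)).mono (by omega)
    · refine ⟨t⁻¹, by rw [FFPlace.ord_inv]; omega, ?_⟩
      simp only [f, if_neg hp]
      have h1 : t * D t⁻¹ = -t⁻¹ := by
        rw [D.leibniz_inv, hD, smul_eq_mul]
        field_simp
      rw [h1]
      exact (FFPlace.Ge.of_le le_rfl).neg
  refine ⟨D, fun h0 => one_ne_zero (α := K) (by rw [← hD, h0]; rfl), fun p => p.ord (f p) - 1,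
    (zeroDiv (F := F) t⁻¹).support, fun p y i hy => ?_, fun p y hy => ?_, fun T hT => ?_⟩
  · obtain ⟨q, hq1, hq2⟩ := hq p
    exact (FFPlace.derivation_ge_sub hff D (hf0 p) hq1 hq2 hy).mono (by dsimp only; omega)
  · obtain ⟨q, hq1, hq2⟩ := hq p
    exact (FFPlace.derivation_ge_one_sub hff D (hf0 p) hq1 hq2 hy).mono (by dsimp only; omega)
  · let e : FFPlace F K → ℤ := fun p => p.ord (f p) - 1 + 2 * max (p.ord t⁻¹) 0
    let E : FFPlace F K →₀ ℤ := Finsupp.onFinset T (fun p => if p ∈ T then e p else 0)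
      (fun p hp => by
        by_contra h
        exact hp (if_neg h))
    have hE : ∀ p, E p = if p ∈ T then e p else 0 := fun p => rfl
    have hz := fun p : FFPlace F K => hff.zeroDiv_apply (inv_ne_zero ht0) p
    have h1 : divDeg E ≤ 2 * divDeg (zeroDiv (F := F) t⁻¹) + 2 * g - 2 := by
      refine divDeg_ramification_le hff hcf hR hs P ?_ ?_ ?_
      · intro p hp
        rw [inv_inv] at hp ⊢
        exact hP p hp
      · intro p hp
        rw [inv_inv] at hp ⊢
        have h1 := (hP p hp).2.2.le_ord (hP0 p hp)
        have h2 := (hge p).1 hp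
        rw [hE]
        simp only [e, f, if_pos h2, FFPlace.ord_inv]
        split_ifs <;> omega
      · intro p hp
        rw [hE]
        rw [FFPlace.ord_inv] at hp ⊢
        have h2 : ¬ 0 ≤ p.ord t := by omega
        simp only [e, f, if_neg h2, FFPlace.ord_inv]
        split_ifs <;> omega
    rw [divDeg_eq_sum E T (fun p hp => by
      by_contra h
      exact hp (by rw [hE, if_neg h])), divDeg_eq_sum (zeroDiv (F := F) t⁻¹) T
        (fun p hp => hT (Finsupp.mem_support_iff.2 hp))] at h1
    rw [Finset.mul_sum] at h1
    have h2 : ∑ p ∈ T, E p * p.deg = ∑ p ∈ T, (p.ord (f p) - 1) * p.deg +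
        ∑ p ∈ T, 2 * (zeroDiv (F := F) t⁻¹ p * p.deg) := by
      rw [← Finset.sum_add_distrib]
      refine Finset.sum_congr rfl fun p hp => ?_
      rw [hE, if_pos hp, hz]
      simp only [e]
      ring
    dsimp only
    omega

namespace FFPlace

variable {p : FFPlace F K} {x y u a ν : K} {i j k b n : ℤ} {c d κ : F} {r : ℕ}

theorem Ge.pow_sub_pow (hx : p.Ge x j) (hy : p.Ge y j) (h : p.Ge (x - y) i) (m : ℕ) :
    p.Ge (x ^ m - y ^ m) ((m - 1 : ℕ) * j + i) := by
  rw [← geom_sum₂_mul]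
  refine Ge.mul (Ge.sum fun l hl => ?_) h
  have hl := Finset.mem_range.1 hl
  have h1 : ((m - 1 : ℕ) : ℤ) = l + (m - 1 - l : ℕ) := by omega
  rw [h1, add_mul]
  exact (hx.pow l).mul (hy.pow _)

theorem Ge.of_pow (h : p.Ge (x ^ r) 1) : p.Ge x 1 := by
  by_cases h0 : x = 0
  · exact h0 ▸ Ge.zero p 1
  · have h1 := h.le_ord (pow_ne_zero r h0)
    rw [ord_pow] at h1
    refine Ge.of_le ?_
    by_contra h2
    have h3 : (r : ℤ) * p.ord x ≤ 0 := mul_nonpos_of_nonneg_of_nonpos (by omega) (by omega)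
    omega

theorem not_ge_algebraMap (p : FFPlace F K) (hc : c ≠ 0) :
    ¬ p.Ge (Algebra.algebraMap F K c) 1 := fun h => by
  have := h.le_ord ((map_ne_zero _).2 hc)
  rw [p.ord_algebraMap c hc] at this
  omega

open Polynomial in
theorem ord_pow_sub_pow [CharZero F] (hν : p.ord ν < 0) (hcd : c ≠ d) (hr : r ≠ 0) :
    (ν + algebraMap F K c) ^ r - (ν + algebraMap F K d) ^ r ≠ 0 ∧
    p.ord ((ν + algebraMap F K c) ^ r - (ν + algebraMap F K d) ^ r) = (r - 1) * p.ord ν := by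
  obtain ⟨s, rfl⟩ := Nat.exists_eq_succ_of_ne_zero hr
  let q : F[X] := (X + C c) ^ (s + 1) - (X + C d) ^ (s + 1)
  have hcoeff : q.coeff s ≠ 0 := by
    simp only [q, coeff_sub, coeff_X_add_C_pow]
    rw [Nat.add_sub_cancel_left, pow_one, pow_one, ← sub_mul, Nat.choose_succ_self_right]
    exact mul_ne_zero (sub_ne_zero.2 hcd) (Nat.cast_ne_zero.2 (Nat.succ_ne_zero s))
  have hdeg : q.natDegree = s := by
    refine natDegree_eq_of_le_of_coeff_ne_zero
      (natDegree_le_iff_coeff_eq_zero.2 fun N hN => ?_) hcoeff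
    simp only [q, coeff_sub, coeff_X_add_C_pow]
    rw [Nat.sub_eq_zero_of_le hN, pow_zero, pow_zero, sub_self]
  have hq0 : q ≠ 0 := fun h0 => hcoeff (by rw [h0, coeff_zero])
  have h := ord_aeval_of_neg hν hq0
  rw [hdeg] at h
  simp only [q, map_sub, map_pow, map_add, aeval_X, aeval_C] at h
  push_cast
  rwa [add_sub_cancel_right]

/-- At a place, among elements `(ν + e i) ^ r - a` with distinct constants `e i`, at most `r`
vanish. -/
theorem card_le_of_ge {ι : Type*} (hr : 0 < r) (s : Finset ι) {e : ι → F}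
    (he : Set.InjOn e s) (h : ∀ i ∈ s, p.Ge ((ν + algebraMap F K (e i)) ^ r - a) 1) :
    s.card ≤ r := by
  classical
  by_contra! hlt
  obtain ⟨t, hts, ht⟩ := Finset.exists_subset_card_eq (Nat.succ_le_of_lt hlt)
  have he' : Set.InjOn (fun i => algebraMap F K (e i)) t := fun i hi j hj hij =>
    he (hts hi) (hts hj) ((algebraMap F K).injective hij)
  let q : Polynomial K := (Polynomial.X + Polynomial.C ν) ^ r - Polynomial.C a
  have hX : ((Polynomial.X + Polynomial.C ν : Polynomial K) ^ r).degree = r := by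
    rw [Polynomial.degree_pow, Polynomial.degree_X_add_C, nsmul_one]
  have hlt : (Polynomial.C a).degree < ((Polynomial.X + Polynomial.C ν : Polynomial K) ^ r).degree := by
    rw [hX]
    exact Polynomial.degree_C_le.trans_lt (by exact_mod_cast hr)
  have hq : q.degree = r := by rw [Polynomial.degree_sub_eq_left_of_degree_lt hlt, hX]
  have hlc : q.leadingCoeff = 1 := by
    rw [Polynomial.leadingCoeff_sub_of_degree_lt hlt]
    exact (Polynomial.monic_X_add_C ν).pow r
  have hsum := Lagrange.leadingCoeff_eq_sum he' (P := q) (by rw [ht, hq]; rfl)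
  rw [hlc] at hsum
  have h1 : p.Ge (1 : K) 1 := by
    rw [hsum]
    refine Ge.sum fun i hi => ?_
    have h2 : q.eval (algebraMap F K (e i)) = (ν + algebraMap F K (e i)) ^ r - a := by
      simp [q, add_comm]
    have h3 : (∏ j ∈ t.erase i, (algebraMap F K (e i) - algebraMap F K (e j)))⁻¹ =
        algebraMap F K (∏ j ∈ t.erase i, (e i - e j))⁻¹ := by
      simp
    rw [div_eq_mul_inv, h2, h3]
    exact ((h i (hts hi)).mul (Ge.algebraMap p _)).mono (by omega)
  have := h1.le_ord one_ne_zero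
  rw [p.ord_one] at this
  omega

theorem derivation_ge_two_mul (D : Derivation F K K)
    (hD1 : ∀ y i, p.Ge y i → p.Ge (D y) (i - 1 - n)) (hD2 : ∀ y, p.Ge y 0 → p.Ge (D y) (-n))
    (hk : 0 ≤ k) (hy : p.Ge y (-k)) : p.Ge (D y) (-2 * k - n) := by
  rcases hk.eq_or_lt with rfl | hk
  · exact (hD2 y hy).mono (by omega)
  · exact (hD1 y _ hy).mono (by omega)

/-- The pole order of the discriminating differential expression. -/
theorem ge_wronskian (D : Derivation F K K)
    (hD1 : ∀ y i, p.Ge y i → p.Ge (D y) (i - 1 - n)) (hD2 : ∀ y, p.Ge y 0 → p.Ge (D y) (-n))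
    (hk : 0 ≤ k) (hν : p.Ge ν (-k)) (hkb : r * k ≤ b) (hb : 0 ≤ b) (ha : p.Ge a (-b))
    (hr : 2 ≤ r) :
    p.Ge ((r : K) ^ r * a ^ (r - 1) * (D ν) ^ r - (D a) ^ r) (-(r * n) - 2 * r * b) := by
  obtain ⟨s, rfl⟩ := Nat.exists_eq_add_of_le' hr
  have h1 := derivation_ge_two_mul D hD1 hD2 hk hν
  have h2 := derivation_ge_two_mul D hD1 hD2 hb ha
  have hsb : 0 ≤ (s : ℤ) * b := by positivity
  push_cast at hkb
  refine Ge.sub ?_ ((h2.pow _).mono (by push_cast; linarith))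
  refine ((((Ge.natCast p _).pow _).mul (ha.pow _)).mul (h1.pow _)).mono ?_
  rw [show s + 2 - 1 = s + 1 from rfl]
  push_cast
  linarith

/-- Zeros of `(ν + c) ^ r - a` propagate to the discriminating differential expression. -/
theorem ge_wronskian_of_ge (D : Derivation F K K)
    (hD1 : ∀ y i, p.Ge y i → p.Ge (D y) (i - 1 - n)) (hD2 : ∀ y, p.Ge y 0 → p.Ge (D y) (-n))
    (hk : 0 ≤ k) (hν : p.Ge ν (-k)) (hkb : r * k ≤ b) (hb : 0 ≤ b) (ha : p.Ge a (-b))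
    (hr : 2 ≤ r) (hy : p.Ge ((ν + algebraMap F K c) ^ r - a) i) :
    p.Ge ((r : K) ^ r * a ^ (r - 1) * (D ν) ^ r - (D a) ^ r)
      (i - 1 - r * n - 2 * r * b) := by
  obtain ⟨s, rfl⟩ := Nat.exists_eq_add_of_le' hr
  set u := ν + algebraMap F K c with hu
  have hDu : D u = D ν := by rw [hu, map_add, D.map_algebraMap, add_zero]
  have hug : p.Ge u (-k) := hν.add ((Ge.algebraMap p c).mono (by omega))
  set U := u ^ (s + 2) with hU
  have hUg : p.Ge U (-b) := (hug.pow _).mono (by linarith)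
  have hDU : D U = ((s + 2 : ℕ) : K) * u ^ (s + 1) * D ν := by
    rw [hU, D.leibniz_pow, hDu, smul_eq_mul, nsmul_eq_mul, mul_assoc]; rfl
  have h1 := derivation_ge_two_mul D hD1 hD2 hk hν
  have h2 := derivation_ge_two_mul D hD1 hD2 hb ha
  have h3 := derivation_ge_two_mul D hD1 hD2 hb hUg
  have h4 : p.Ge (a - U) i := by rw [← neg_sub]; exact hy.neg
  have h5 := ha.pow_sub_pow hUg h4 (s + 1)
  have h6 := h3.pow_sub_pow h2 (by rw [← map_sub]; exact hD1 _ _ hy) (s + 2)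
  have h7 : ((s + 2 : ℕ) : K) ^ (s + 2) * a ^ (s + 2 - 1) * (D ν) ^ (s + 2) - (D a) ^ (s + 2) =
      ((s + 2 : ℕ) : K) ^ (s + 2) * (D ν) ^ (s + 2) * (a ^ (s + 1) - U ^ (s + 1)) +
        ((D U) ^ (s + 2) - (D a) ^ (s + 2)) := by
    have h8 : (u ^ (s + 1)) ^ (s + 2) = U ^ (s + 1) := by
      rw [hU, ← pow_mul, ← pow_mul, mul_comm]
    rw [hDU, mul_pow, mul_pow, h8, show s + 2 - 1 = s + 1 from rfl]
    generalize U ^ (s + 1) = W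
    ring
  have hsb : 0 ≤ (s : ℤ) * b := by positivity
  push_cast at hkb
  rw [h7]
  refine Ge.add ?_ (h6.mono ?_)
  · refine ((((Ge.natCast p _).pow _).mul (h1.pow _)).mul h5).mono ?_
    rw [show s + 1 - 1 = s from rfl]
    push_cast
    linarith
  · rw [show s + 2 - 1 = s + 1 from rfl]
    push_cast
    linarith

/-- If `a = (ν + κ) ^ r` with `κ` constant, zeros of `(ν + c) ^ r - a` propagate to `D ν`. -/
theorem derivation_ge_of_pow_sub_pow [CharZero F] (D : Derivation F K K)
    (hD1 : ∀ y i, p.Ge y i → p.Ge (D y) (i - 1 - n)) (hr : 2 ≤ r) (hc : c ≠ κ) (hi : 1 ≤ i)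
    (hy : p.Ge ((ν + algebraMap F K c) ^ r - (ν + algebraMap F K κ) ^ r) i) :
    p.Ge (D ν) (i - 1 - n) := by
  obtain ⟨s, rfl⟩ := Nat.exists_eq_add_of_le' hr
  have hν : p.Ge ν 0 := by
    refine Ge.of_le ?_
    by_contra! h
    obtain ⟨h1, h2⟩ := ord_pow_sub_pow (p := p) h hc (r := s + 2) (by omega)
    have h3 := hy.le_ord h1
    rw [h2] at h3
    have h4 : (((s + 2 : ℕ) : ℤ) - 1) * p.ord ν ≤ 0 :=
      mul_nonpos_of_nonneg_of_nonpos (by push_cast; omega) h.le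
    omega
  set u := ν + algebraMap F K c with hu
  set v := ν + algebraMap F K κ with hv
  have hDu : D u = D ν := by rw [hu, map_add, D.map_algebraMap, add_zero]
  have hDv : D v = D ν := by rw [hv, map_add, D.map_algebraMap, add_zero]
  have hug : p.Ge u 0 := hν.add (Ge.algebraMap p c)
  have hvg : p.Ge v 0 := hν.add (Ge.algebraMap p κ)
  have huv : u - v = algebraMap F K (c - κ) := by rw [hu, hv, map_sub]; ring
  have hw : ¬ p.Ge (u ^ (s + 1) - v ^ (s + 1)) 1 := by
    intro h
    have h1 : u ^ (s + 1) = (algebraMap F K (c - κ)⁻¹) *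
        ((u ^ (s + 2) - v ^ (s + 2)) - (u ^ (s + 1) - v ^ (s + 1)) * v) := by
      rw [map_inv₀, ← huv]
      have h2 : u - v ≠ 0 := by rw [huv]; exact (map_ne_zero _).2 (sub_ne_zero.2 hc)
      rw [eq_inv_mul_iff_mul_eq₀ h2]
      ring
    have hu1 : p.Ge u 1 := by
      refine Ge.of_pow (r := s + 1) ?_
      rw [h1]
      exact ((Ge.algebraMap p _).mul ((hy.mono hi).sub ((h.mul hvg).mono (by omega)))).mono
        (by omega)
    have hv1 : p.Ge v 1 := by
      refine Ge.of_pow (r := s + 1) ?_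
      rw [show v ^ (s + 1) = u ^ (s + 1) - (u ^ (s + 1) - v ^ (s + 1)) by ring]
      exact ((hu1.pow (s + 1)).mono (by push_cast; omega)).sub h
    exact not_ge_algebraMap p (sub_ne_zero.2 hc) (huv ▸ hu1.sub hv1)
  have hw0 : u ^ (s + 1) - v ^ (s + 1) ≠ 0 := fun h0 => hw (h0 ▸ Ge.zero p 1)
  have hwo : p.ord (u ^ (s + 1) - v ^ (s + 1)) < 1 := by
    by_contra! h
    exact hw (Ge.of_le h)
  have hw' : p.Ge (u ^ (s + 1) - v ^ (s + 1))⁻¹ 0 := Ge.of_le (by rw [ord_inv]; omega)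
  have hs : ((s + 2 : ℕ) : F) ≠ 0 := Nat.cast_ne_zero.2 (by omega)
  have hs' : ((s + 2 : ℕ) : K) ≠ 0 := by
    rw [← map_natCast (algebraMap F K)]; exact (map_ne_zero _).2 hs
  have h1 : D ν = algebraMap F K ((s + 2 : ℕ) : F)⁻¹ * (u ^ (s + 1) - v ^ (s + 1))⁻¹ *
      D (u ^ (s + 2) - v ^ (s + 2)) := by
    rw [map_sub, D.leibniz_pow, D.leibniz_pow, hDu, hDv, map_inv₀, map_natCast,
      show s + 2 - 1 = s + 1 from rfl]
    simp only [smul_eq_mul, nsmul_eq_mul]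
    field_simp
  rw [h1]
  exact (((Ge.algebraMap p _).mul hw').mul (hD1 _ _ hy)).mono (by omega)

end FFPlace

namespace FFPlace

variable {p : FFPlace F K} {a ν : K} {m : ℤ} {c d : F} {r : ℕ}

/-- The larger of the pole orders of `ν ^ r` and `a`. -/
def poleBound (p : FFPlace F K) (r : ℕ) (ν a : K) : ℤ :=
  max (r * max (-p.ord ν) 0) (max (-p.ord a) 0)

theorem poleBound_nonneg (p : FFPlace F K) (r : ℕ) (ν a : K) : 0 ≤ p.poleBound r ν a :=
  (le_max_right _ _).trans (le_max_right _ _)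

theorem poleBound_le [CharZero F] (hr : 2 ≤ r) (hcd : c ≠ d) (hm : 0 ≤ m)
    (h1 : p.Ge ((ν + algebraMap F K c) ^ r - a) (-m))
    (h2 : p.Ge ((ν + algebraMap F K d) ^ r - a) (-m)) : p.poleBound r ν a ≤ 2 * m := by
  have hug : p.Ge ((ν + algebraMap F K c) ^ r) (-(r * max (-p.ord ν) 0)) :=
    (((Ge.of_le (p := p) (x := ν) (i := -max (-p.ord ν) 0) (by omega)).add
      ((Ge.algebraMap p c).mono (by omega))).pow r).mono (by linarith)
  rw [poleBound]
  by_cases h : r * max (-p.ord ν) 0 < -p.ord a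
  · have h0 : 0 ≤ r * max (-p.ord ν) 0 := by positivity
    have ha : a ≠ 0 := ne_zero_of_ord_ne_zero (p := p) (by omega)
    obtain ⟨h3, h4⟩ := ord_add_eq_of_lt (neg_ne_zero.2 ha)
      (hug.mono (by rw [p.ord_neg a ha]; omega))
    rw [p.ord_neg a ha] at h4
    rw [sub_eq_neg_add] at h1
    have h5 := h1.le_ord h3
    omega
  · rcases le_or_gt 0 (p.ord ν) with hν | hν
    · rw [max_eq_right (by omega : -p.ord ν ≤ 0)] at h ⊢
      omega
    · obtain ⟨h3, h4⟩ := ord_pow_sub_pow (p := p) hν hcd (r := r) (by omega)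
      have h5 := h1.sub h2
      rw [sub_sub_sub_cancel_right] at h5
      have h6 := h5.le_ord h3
      rw [h4] at h6
      rw [max_eq_left (by omega : 0 ≤ -p.ord ν)] at h ⊢
      have h7 : (2 : ℤ) ≤ r := by exact_mod_cast hr
      have h8 : (r : ℤ) * -p.ord ν ≤ 2 * m := by nlinarith
      omega

theorem sum_pole_ge [CharZero F] (p : FFPlace F K) {ι : Type*} (hr : 2 ≤ r) (s : Finset ι)
    {e : ι → F} (he : Set.InjOn e s) :
    ((s.card : ℤ) - 1) * p.poleBound r ν a ≤
      ∑ i ∈ s, 2 * max (-p.ord ((ν + algebraMap F K (e i)) ^ r - a)) 0 := by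
  classical
  have hb := p.poleBound_nonneg r ν a
  by_cases h : ∃ i ∈ s, 2 * max (-p.ord ((ν + algebraMap F K (e i)) ^ r - a)) 0 <
      p.poleBound r ν a
  · obtain ⟨i, hi, hlt⟩ := h
    have h1 : ∀ j ∈ s.erase i, p.poleBound r ν a ≤
        2 * max (-p.ord ((ν + algebraMap F K (e j)) ^ r - a)) 0 := by
      intro j hj
      have hj := Finset.mem_erase.1 hj
      by_contra! h2
      have h3 := poleBound_le (p := p) (ν := ν) (a := a)
        (m := max (max (-p.ord ((ν + algebraMap F K (e i)) ^ r - a)) 0)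
          (max (-p.ord ((ν + algebraMap F K (e j)) ^ r - a)) 0)) hr
        (fun h => hj.1 (he hj.2 hi h.symm)) (by omega) (Ge.of_le (by omega)) (Ge.of_le (by omega))
      omega
    have h2 := Finset.card_nsmul_le_sum _ _ _ h1
    rw [Finset.card_erase_of_mem hi, nsmul_eq_mul,
      Nat.cast_pred (Finset.card_pos.2 ⟨i, hi⟩)] at h2
    exact h2.trans (Finset.sum_le_sum_of_subset_of_nonneg (Finset.erase_subset i s)
      fun j _ _ => by positivity)
  · push Not at h
    have h2 := Finset.card_nsmul_le_sum _ _ _ h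
    rw [nsmul_eq_mul] at h2
    linarith

theorem sum_zero_le {ι : Type*} (hr : 2 ≤ r) (s : Finset ι)
    {e : ι → F} (he : Set.InjOn e s) {x : ι → K} {w : ℤ}
    (hx : ∀ i ∈ s, x i ^ r = (ν + algebraMap F K (e i)) ^ r - a) (hw : 0 ≤ w)
    (h : ∀ i ∈ s, 1 ≤ p.ord (x i ^ r) → p.ord (x i ^ r) - 1 ≤ w) :
    ∑ i ∈ s, max (p.ord (x i ^ r)) 0 ≤ 2 * r * w := by
  classical
  have h1 : (s.filter fun i => 1 ≤ p.ord (x i ^ r)).card ≤ r :=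
    card_le_of_ge (p := p) (ν := ν) (a := a) (by omega) _
      (he.mono (Finset.coe_subset.2 (Finset.filter_subset _ _))) fun i hi => by
        have hi := Finset.mem_filter.1 hi
        rw [← hx i hi.1]
        exact Ge.of_le hi.2
  have h2 : ∑ i ∈ s, max (p.ord (x i ^ r)) 0 =
      ∑ i ∈ s.filter fun i => 1 ≤ p.ord (x i ^ r), p.ord (x i ^ r) := by
    rw [Finset.sum_filter]
    refine Finset.sum_congr rfl fun i _ => ?_
    split_ifs <;> omega
  have h3 : ∀ i ∈ s.filter fun i => 1 ≤ p.ord (x i ^ r), p.ord (x i ^ r) ≤ 2 * w := by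
    intro i hi
    have hi := Finset.mem_filter.1 hi
    have h4 := h i hi.1 hi.2
    have h5 := hi.2
    rw [ord_pow] at h4 h5 ⊢
    have h6 : (2 : ℤ) ≤ r := by exact_mod_cast hr
    have h7 : 1 ≤ p.ord (x i) := by
      by_contra! h8
      have : (r : ℤ) * p.ord (x i) ≤ 0 :=
        mul_nonpos_of_nonneg_of_nonpos (by omega) (by omega)
      omega
    nlinarith
  rw [h2]
  refine (Finset.sum_le_card_nsmul _ _ _ h3).trans ?_
  rw [nsmul_eq_mul]
  have h8 : ((s.filter fun i => 1 ≤ p.ord (x i ^ r)).card : ℤ) ≤ r := by exact_mod_cast h1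
  nlinarith

end FFPlace

/-- A nonzero function whose zeros control those of all `(ν + c) ^ r - a`. -/
theorem exists_discriminating_function [CharZero F] (hff : IsFunctionField F K)
    (hcf : IsConstantField F K) {D : Derivation F K K} (hD : D ≠ 0) {n : FFPlace F K → ℤ}
    (hD1 : ∀ (p : FFPlace F K) y i, p.Ge y i → p.Ge (D y) (i - 1 - n p))
    (hD2 : ∀ (p : FFPlace F K) y, p.Ge y 0 → p.Ge (D y) (-n p))
    {r : ℕ} (hr : 2 ≤ r) {a ν : K} (ha : a ≠ 0)
    (hnc : ν ∉ (algebraMap F K).range ∨ a ∉ (algebraMap F K).range) :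
    ∃ G : K, G ≠ 0 ∧ ∀ p : FFPlace F K,
      p.Ge G (-(r * n p) - 2 * r * p.poleBound r ν a) ∧
      ∀ (c : F) (i : ℤ), (ν + algebraMap F K c) ^ r - a ≠ 0 → 1 ≤ i →
        p.Ge ((ν + algebraMap F K c) ^ r - a) i →
        p.Ge G (i - 1 - r * n p - 2 * r * p.poleBound r ν a) := by
  have hk := fun p : FFPlace F K => le_max_right (-p.ord ν) 0
  have hν : ∀ p : FFPlace F K, p.Ge ν (-max (-p.ord ν) 0) :=
    fun p => FFPlace.Ge.of_le (by omega)
  have hkb : ∀ p : FFPlace F K, r * max (-p.ord ν) 0 ≤ p.poleBound r ν a :=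
    fun p => le_max_left _ _
  have hab : ∀ p : FFPlace F K, p.Ge a (-p.poleBound r ν a) := fun p =>
    FFPlace.Ge.of_le (by
      have h : max (-p.ord a) 0 ≤ p.poleBound r ν a := le_max_right _ _
      omega)
  have hb := fun p : FFPlace F K => p.poleBound_nonneg r ν a
  by_cases hΦ : (r : K) ^ r * a ^ (r - 1) * (D ν) ^ r - (D a) ^ r = 0
  · have hrK : (r : K) ≠ 0 := by
      rw [← map_natCast (algebraMap F K)]
      exact (map_ne_zero _).2 (Nat.cast_ne_zero.2 (by omega))
    have hDν : D ν ≠ 0 := by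
      intro h0
      rw [h0, zero_pow (by omega), mul_zero, zero_sub, neg_eq_zero] at hΦ
      have h1 := eq_zero_of_pow_eq_zero hΦ
      exact hnc.elim (fun h => h (mem_range_of_derivation_eq_zero hff hcf hD h0))
        (fun h => h (mem_range_of_derivation_eq_zero hff hcf hD h1))
    rw [sub_eq_zero] at hΦ
    have hDa : D a ≠ 0 := by
      intro h0
      rw [h0, zero_pow (by omega)] at hΦ
      exact mul_ne_zero (mul_ne_zero (pow_ne_zero _ hrK) (pow_ne_zero _ ha))
        (pow_ne_zero _ hDν) hΦ
    obtain ⟨β, hβ⟩ : ∃ β, β = r * a * D ν / D a := ⟨_, rfl⟩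
    have hβr : β ^ r = a := by
      rw [hβ, div_pow, mul_pow, mul_pow, div_eq_iff (pow_ne_zero _ hDa), ← hΦ]
      rw [← pow_sub_one_mul (by omega : r ≠ 0) a]
      ring
    have hβ0 : β ≠ 0 := fun h0 => ha (by rw [← hβr, h0, zero_pow (by omega)])
    have hDβ : D β = D ν := by
      have h1 : D a = r * β ^ (r - 1) * D β := by
        conv_lhs => rw [← hβr]
        rw [D.leibniz_pow, smul_eq_mul, nsmul_eq_mul, mul_assoc]
      have h2 : β * D a = r * a * D ν := by rw [hβ, div_mul_cancel₀ _ hDa]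
      have h3 : r * a * D β = r * a * D ν := by
        rw [← h2, h1]
        nth_rewrite 1 [← hβr]
        rw [← pow_sub_one_mul (by omega : r ≠ 0) β]
        ring
      exact mul_left_cancel₀ (mul_ne_zero hrK ha) h3
    obtain ⟨κ, hκ⟩ := mem_range_of_derivation_eq_zero hff hcf hD (y := β - ν)
      (by rw [map_sub, hDβ, sub_self])
    have hβν : a = (ν + algebraMap F K κ) ^ r := by rw [hκ, add_sub_cancel, hβr]
    refine ⟨(D ν) ^ r, pow_ne_zero _ hDν, fun p => ⟨?_, fun c i h0 hi hy => ?_⟩⟩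
    · have h1 := FFPlace.derivation_ge_two_mul D (hD1 p) (hD2 p) (hk p) (hν p)
      have h2 := hkb p
      have h4 : (2 : ℤ) ≤ r := by exact_mod_cast hr
      have h3 := mul_le_mul_of_nonneg_right h4 (hb p)
      exact (h1.pow r).mono (by linarith [hb p])
    · rw [hβν] at h0 hy
      have hcκ : c ≠ κ := by
        rintro rfl
        exact h0 (sub_self _)
      have h1 := FFPlace.derivation_ge_of_pow_sub_pow D (hD1 p) hr hcκ hi hy
      refine (h1.pow r).mono ?_
      have h2 : (2 : ℤ) ≤ r := by exact_mod_cast hr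
      have h3 := mul_nonneg (by omega : (0 : ℤ) ≤ 2 * r) (hb p)
      nlinarith
  · exact ⟨_, hΦ, fun p => ⟨FFPlace.ge_wronskian D (hD1 p) (hD2 p) (hk p) (hν p) (hkb p) (hb p)
      (hab p) hr, fun c i _ _ hy => FFPlace.ge_wronskian_of_ge D (hD1 p) (hD2 p) (hk p) (hν p)
      (hkb p) (hb p) (hab p) hr hy⟩⟩

/-- At most `8 * r ^ 2 * (g + 1) + 1` of the elements `(ν + e i) ^ r - a` are nonzero `r`-th
powers. -/
theorem card_le_of_pow_eq [CharZero F] (hff : IsFunctionField F K)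
    (hcf : IsConstantField F K) {g : ℕ}
    (hR : ∀ A : FFPlace F K →₀ ℤ, divDeg A - ellDim A + 1 ≤ g)
    {r : ℕ} (hr : 2 ≤ r) {a ν : K} (ha : a ≠ 0)
    (hnc : ν ∉ (algebraMap F K).range ∨ a ∉ (algebraMap F K).range)
    {ι : Type*} (s : Finset ι) {e : ι → F} (he : Set.InjOn e s) {x : ι → K}
    (hx : ∀ i ∈ s, x i ^ r = (ν + algebraMap F K (e i)) ^ r - a) (hx0 : ∀ i ∈ s, x i ≠ 0) :
    s.card ≤ 8 * r ^ 2 * (g + 1) + 1 := by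
  classical
  obtain ⟨D, hD, n, T₀, hD1, hD2, hn⟩ := exists_derivation_divisor hff hcf hR
  obtain ⟨G, hG, hGp⟩ := exists_discriminating_function hff hcf hD hD1 hD2 hr ha hnc (ν := ν)
  obtain ⟨f, hf, p₀, hp₀, hfb⟩ : ∃ f : K, f ≠ 0 ∧ ∃ p₀ : FFPlace F K, p₀.ord f ≠ 0 ∧
      0 < p₀.poleBound r ν a := by
    have hpole : ∀ f : K, f ∉ (algebraMap F K).range → ∃ p : FFPlace F K, p.ord f < 0 :=
      fun f hf => hff.exists_pole fun h => hf (hcf f h)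
    rcases hnc with h | h
    · obtain ⟨p, hp⟩ := hpole ν h
      refine ⟨ν, FFPlace.ne_zero_of_ord_ne_zero hp.ne, p, hp.ne, lt_max_of_lt_left ?_⟩
      exact mul_pos (by omega) (lt_max_of_lt_left (by omega))
    · obtain ⟨p, hp⟩ := hpole a h
      exact ⟨a, FFPlace.ne_zero_of_ord_ne_zero hp.ne, p, hp.ne,
        lt_max_of_lt_right (lt_max_of_lt_left (by omega))⟩
  have hxr : ∀ i ∈ s, x i ^ r ≠ 0 := fun i hi => pow_ne_zero r (hx0 i hi)
  have hfin : (⋃ i ∈ s, {p : FFPlace F K | p.ord (x i ^ r) ≠ 0}).Finite :=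
    s.finite_toSet.biUnion fun i hi => hff.finite_ord_ne_zero (hxr i hi)
  let T := T₀ ∪ (hff.finite_ord_ne_zero hG).toFinset ∪ (hff.finite_ord_ne_zero hf).toFinset ∪
    hfin.toFinset
  have hT₀ : T₀ ⊆ T := fun p hp => by simp [T, hp]
  have hTG := sum_ord_mul_deg hff hcf hR hG T fun p hp => by simp [T, hp]
  have hTp₀ : p₀ ∈ T := by simp [T, hp₀]
  have hTx : ∀ i ∈ s, ∑ p ∈ T, p.ord (x i ^ r) * p.deg = 0 := fun i hi =>
    sum_ord_mul_deg hff hcf hR (hxr i hi) T fun p hp =>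
      Finset.mem_union_right _ (by simpa using ⟨i, hi, by simpa using hp⟩)
  have hzero : ∀ p : FFPlace F K, ∑ i ∈ s, max (p.ord (x i ^ r)) 0 ≤
      2 * r * (p.ord G + r * n p + 2 * r * p.poleBound r ν a) := by
    intro p
    obtain ⟨h1, h2⟩ := hGp p
    have h1 := h1.le_ord hG
    refine FFPlace.sum_zero_le hr s he hx (by linarith) fun i hi hi1 => ?_
    have h3 := (h2 (e i) _ (by rw [← hx i hi]; exact hxr i hi) hi1
      (by rw [← hx i hi]; exact FFPlace.Ge.of_le le_rfl)).le_ord hG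
    linarith
  have hpole : ∀ p : FFPlace F K, ((s.card : ℤ) - 1) * p.poleBound r ν a ≤
      ∑ i ∈ s, 2 * max (-p.ord (x i ^ r)) 0 := by
    intro p
    refine (p.sum_pole_ge hr s he).trans_eq (Finset.sum_congr rfl fun i hi => ?_)
    rw [hx i hi]
  have hplace : ∀ p : FFPlace F K, ((s.card : ℤ) - 1) * p.poleBound r ν a +
      2 * ∑ i ∈ s, p.ord (x i ^ r) ≤
      4 * r * (p.ord G + r * n p + 2 * r * p.poleBound r ν a) := by
    intro p
    have h1 : ∑ i ∈ s, 2 * max (-p.ord (x i ^ r)) 0 + 2 * ∑ i ∈ s, p.ord (x i ^ r) =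
        2 * ∑ i ∈ s, max (p.ord (x i ^ r)) 0 := by
      rw [Finset.mul_sum, Finset.mul_sum, ← Finset.sum_add_distrib]
      exact Finset.sum_congr rfl fun i _ => by omega
    linarith [hzero p, hpole p]
  have hsum := Finset.sum_le_sum fun p (_ : p ∈ T) =>
    mul_le_mul_of_nonneg_right (hplace p) (Int.natCast_nonneg p.deg)
  have hL : ∑ p ∈ T, (((s.card : ℤ) - 1) * p.poleBound r ν a +
      2 * ∑ i ∈ s, p.ord (x i ^ r)) * p.deg =
      ((s.card : ℤ) - 1) * ∑ p ∈ T, p.poleBound r ν a * p.deg := by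
    have h1 : ∑ p ∈ T, (∑ i ∈ s, p.ord (x i ^ r)) * p.deg = 0 := by
      simp_rw [Finset.sum_mul]
      rw [Finset.sum_comm]
      exact Finset.sum_eq_zero hTx
    simp_rw [add_mul, Finset.sum_add_distrib, mul_assoc]
    rw [← Finset.mul_sum, ← Finset.mul_sum, h1]
    ring
  have hRt : ∑ p ∈ T, 4 * r * (p.ord G + r * n p + 2 * r * p.poleBound r ν a) * p.deg =
      4 * r * (∑ p ∈ T, p.ord G * p.deg + r * ∑ p ∈ T, n p * p.deg +
        2 * r * ∑ p ∈ T, p.poleBound r ν a * p.deg) := by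
    rw [Finset.mul_sum, Finset.mul_sum, ← Finset.sum_add_distrib, ← Finset.sum_add_distrib,
      Finset.mul_sum]
    exact Finset.sum_congr rfl fun p _ => by ring
  rw [hL, hRt, hTG] at hsum
  have hH : 1 ≤ ∑ p ∈ T, p.poleBound r ν a * p.deg := by
    have h1 := Finset.single_le_sum (f := fun p : FFPlace F K => p.poleBound r ν a * p.deg)
      (fun p _ => mul_nonneg (p.poleBound_nonneg r ν a) (Int.natCast_nonneg p.deg)) hTp₀
    have h2 : 0 < p₀.poleBound r ν a * p₀.deg :=
      mul_pos hfb (Int.natCast_pos.2 (FFPlace.deg_pos hff p₀))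
    exact (Int.add_one_le_iff.2 h2).trans h1
  have hn' := hn T hT₀
  set H := ∑ p ∈ T, p.poleBound r ν a * p.deg
  set N := ∑ p ∈ T, n p * p.deg
  have h1 : 4 * (r : ℤ) * (r * N) ≤ 4 * r * (r * (2 * g - 2)) := by gcongr
  zify
  by_contra! hlt
  have h2 : 0 < (s.card : ℤ) - 1 - 8 * r ^ 2 := by nlinarith [sq_nonneg (r : ℤ)]
  have h3 := mul_le_mul_of_nonneg_left hH h2.le
  nlinarith [sq_nonneg (r : ℤ)]

/-- Hensley's problem for `r`-th powers over a function field `K` of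
genus `g` with field of constants `F` of characteristic zero, with the `c_n`
distinct rational numbers: if `M ≥ (8r+4+3r/(r-1))·3r²·g + (4r+2+2r/(r-1))·3r² + 1`
and `x_n^r = (ν + c_n)^r - a` for `0 ≤ n ≤ M-1` with some `x_i` non-constant,
then `a = 0`. -/
theorem hensley_rth_powers_function_field_char_zero
    (F K : Type) [Field F] [Field K] [Algebra F K] [CharZero F]
    (hff : IsFunctionField F K) (hcf : IsConstantField F K)
    (g : ℕ) (hg : IsGenus F K g)
    (r : ℕ) (hr : 2 ≤ r) (M : ℕ)
    (c : ℕ → ℚ) (hc : ∀ i j, i < M → j < M → c i = c j → i = j)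
    (a ν : K) (x : ℕ → K)
    (hnc : ∃ i, i < M ∧ x i ∉ (algebraMap F K).range)
    (heq : ∀ n, n < M → x n ^ r = (ν + ((c n : ℚ) : K)) ^ r - a)
    (hM : ((8 * r + 4 + 3 * r / (r - 1)) * (3 * r ^ 2) * g
        + (4 * r + 2 + 2 * r / (r - 1)) * (3 * r ^ 2) + 1 : ℚ) ≤ (M : ℚ)) :
    a = 0 := by
  classical
  by_contra ha
  have hR : ∀ A : FFPlace F K →₀ ℤ, divDeg A - ellDim A + 1 ≤ g := fun A => hg.2 ⟨A, rfl⟩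
  have hinj : ∀ s ⊆ Finset.range M, Set.InjOn (fun n => ((c n : ℚ) : F)) s :=
    fun s hs i hi j hj hij => hc i j (Finset.mem_range.1 (hs hi)) (Finset.mem_range.1 (hs hj))
      (Rat.cast_injective hij)
  have heq' : ∀ n < M, x n ^ r = (ν + algebraMap F K (c n : F)) ^ r - a := fun n hn => by
    rw [heq n hn, map_ratCast]
  have hnc' : ν ∉ (algebraMap F K).range ∨ a ∉ (algebraMap F K).range := by
    by_contra! h
    obtain ⟨⟨u, hu⟩, ⟨b, hb⟩⟩ := h
    obtain ⟨i, hi, hxi⟩ := hnc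
    refine hxi (hcf _ (IsAlgebraic.of_pow (n := r) (by omega) ?_))
    have h1 : x i ^ r = algebraMap F K ((u + c i) ^ r - b) := by
      rw [heq' i hi, ← hu, ← hb, map_sub, map_pow, map_add]
    rw [h1]
    exact isAlgebraic_algebraMap _
  have h1 := card_le_of_pow_eq hff hcf hR hr ha hnc' ((Finset.range M).filter fun n => x n ≠ 0)
    (hinj _ (Finset.filter_subset _ _)) (x := x)
    (fun n hn => heq' n (Finset.mem_range.1 (Finset.mem_filter.1 hn).1))
    (fun n hn => (Finset.mem_filter.1 hn).2)
  obtain ⟨t, ht, -⟩ := id hff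
  obtain ⟨p, -⟩ := hff.exists_pole ht
  have h2 : ((Finset.range M).filter fun n => ¬ x n ≠ 0).card ≤ r :=
    FFPlace.card_le_of_ge (p := p) (ν := ν) (a := a) (by omega) _
      (hinj _ (Finset.filter_subset _ _)) fun n hn => by
        have hn := Finset.mem_filter.1 hn
        rw [← heq' n (Finset.mem_range.1 hn.1), not_not.1 hn.2, zero_pow (by omega)]
        exact FFPlace.Ge.zero p 1
  have h3 := Finset.card_filter_add_card_filter_not (s := Finset.range M) (fun n => x n ≠ 0)
  rw [Finset.card_range] at h3
  have h4 : M ≤ 8 * r ^ 2 * (g + 1) + 1 + r := by omega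
  have h4' : (M : ℚ) ≤ 8 * r ^ 2 * (g + 1) + 1 + r := by exact_mod_cast h4
  have hr' : (2 : ℚ) ≤ r := by exact_mod_cast hr
  have hg0 : (0 : ℚ) ≤ g := by positivity
  have h5 : (0 : ℚ) ≤ 3 * r / (r - 1) := div_nonneg (by linarith) (by linarith)
  have h6 : (0 : ℚ) ≤ 2 * r / (r - 1) := div_nonneg (by linarith) (by linarith)
  have h7 : (20 : ℚ) * (3 * r ^ 2) * g ≤ (8 * r + 4 + 3 * r / (r - 1)) * (3 * r ^ 2) * g := by
    gcongr
    linarith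
  have h8 : (10 : ℚ) * (3 * r ^ 2) ≤ (4 * r + 2 + 2 * r / (r - 1)) * (3 * r ^ 2) := by
    gcongr
    linarith
  have h9 : (0 : ℚ) ≤ r ^ 2 * g := by positivity
  nlinarith
end
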